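/- arXiv:2004.03542 — 3 statements merged into one kernel-verified Lean document; each statement's English description precedes it below -/
import Mathlib

section
/- Assume f satisfies the growth condition (A₃). Let r > 0 and let x : [0,1] → ℝ be continuously differentiable with x(0) = x(1) = 0 and ‖x‖ ≤ r. Define (Zx)(t) = ∫₀¹ G(t,s)·f(s, x(s), x'(s)) ds + ∫₀¹ H(t,s)·x(s) ds. Then Zx is differentiable on [0,1] (one-sidedly at the endpoints) and for every t ∈ [0,1], |(Zx)'(t)| ≤ (‖σ‖ + a₁·r^{τ₁} + a₂·r^{τ₂})·K₂ + r·L₂. -/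
/-!
Write `Zx` as a sum of convolution terms and of terms `(power of t) × (constant integral)`. The
latter are differentiated explicitly, so the point is the convolution terms. Both have the form
`∫₀¹ k(s) Φ(t - s) ds` with `k` integrable and `Φ` a `C¹` function on `[0,1]` extended by constants
(`hasDerivAt_clamped_convolution`). For the kernel `G` one takes `k = f(s, x, x')` and
`Φ(y) = y ^ (α + β - 1)`. For `H` the weight `(t - s) ^ (α - 1)` may be singular on the diagonal;
the substitution `u = t - s` turns it into `k(u) = u ^ (α - 1)` with `Φ = x`
(`integral_singular_eq`), where `x(0) = 0` makes the extension by zero the right one.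

The weight `(1 - s) ^ (α - 2)` in `H` is not integrable, but `x(1) = 0` and the mean value
inequality give `|x(s)| ≤ sup |x'| * (1 - s)`, so the integral converges and is at most
`sup |x'| / α`. With `sup |x| + sup |x'| ≤ r` the remaining estimates are elementary
(`green_G_part`, `green_H_part`).
-/

open Set intervalIntegral

noncomputable def GreenG (α β : ℝ) (t s : ℝ) : ℝ :=
  (1 / Real.Gamma (α + β)) *
    ((if s ≤ t then (t - s) ^ (α + β - 1) else 0)
      + ((α + 1) * t ^ (α + 2) - (α + 2) * t ^ (α + 1)) * (1 - s) ^ (α + β - 1)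
      + (α + β - 1) * (t ^ (α + 1) - t ^ (α + 2)) * (1 - s) ^ (α + β - 2))

noncomputable def GreenH (α γ : ℝ) (t s : ℝ) : ℝ :=
  (γ / Real.Gamma α) *
    (-(if s ≤ t then (t - s) ^ (α - 1) else 0)
      + ((α + 2) * t ^ (α + 1) - (α + 1) * t ^ (α + 2)) * (1 - s) ^ (α - 1)
      + (α - 1) * (t ^ (α + 2) - t ^ (α + 1)) * (1 - s) ^ (α - 2))

/-! ### Convolutions and integrals with power weights -/

open MeasureTheory Filter Topology in
/-- Differentiation of a convolution `t ↦ ∫₀¹ k(s) Φ(t - s) ds`, where `k` is merely integrable and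
`Φ` is a `C¹` function on `[0,1]` extended by its endpoint values. Such a `Φ` is Lipschitz and
differentiable off `{0, 1}`, so dominated differentiation applies for every `t`. -/
lemma hasDerivAt_clamped_convolution {φ φ' k : ℝ → ℝ} {C : ℝ}
    (hφ : ∀ y ∈ Icc (0:ℝ) 1, HasDerivWithinAt φ (φ' y) (Icc (0:ℝ) 1) y)
    (hφ'c : ContinuousOn φ' (Icc 0 1)) (hC : ∀ y ∈ Icc (0:ℝ) 1, |φ' y| ≤ C)
    (hk : IntervalIntegrable k volume 0 1) (t : ℝ) :
    HasDerivAt (fun t => ∫ s in (0:ℝ)..1, k s * φ (max 0 (min 1 (t - s))))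
      (∫ s in (0:ℝ)..1, k s * (Ioo (0:ℝ) 1).indicator φ' (t - s)) t := by
  have hC0 : 0 ≤ C := (abs_nonneg _).trans (hC 0 (by simp))
  have hmem : ∀ y : ℝ, max 0 (min 1 y) ∈ Icc (0:ℝ) 1 := fun y => by simp
  have hΦlip : ∀ y z : ℝ, |φ (max 0 (min 1 y)) - φ (max 0 (min 1 z))| ≤ C * |y - z| := by
    intro y z
    have h1 := (convex_Icc (0:ℝ) 1).norm_image_sub_le_of_norm_hasDerivWithin_le
      (f := φ) (f' := φ') (C := C) hφ (fun w hw => by simpa using hC w hw) (hmem z) (hmem y)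
    simp only [Real.norm_eq_abs] at h1
    have h2 : |max 0 (min 1 y) - max 0 (min 1 z)| ≤ |y - z| := by
      refine (?_ : _ ≤ |min 1 y - min 1 z|).trans ?_
      · simpa using abs_max_sub_max_le_max 0 (min 1 y) 0 (min 1 z)
      · simpa using abs_min_sub_min_le_max 1 y 1 z
    exact h1.trans (mul_le_mul_of_nonneg_left h2 hC0)
  have hΦc : Continuous fun y : ℝ => φ (max 0 (min 1 y)) := by
    have hφc : ContinuousOn φ (Icc 0 1) := fun y hy => (hφ y hy).continuousWithinAt
    exact hφc.comp_continuous (by fun_prop) hmem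
  have hmeas : Measurable ((Ioo (0:ℝ) 1).indicator φ') := by
    have h1 : Continuous fun y : ℝ => φ' (max 0 (min 1 y)) :=
      hφ'c.comp_continuous (by fun_prop) hmem
    have h2 : (Ioo (0:ℝ) 1).indicator φ'
        = (Ioo (0:ℝ) 1).indicator fun y => φ' (max 0 (min 1 y)) :=
      indicator_congr fun y hy => by rw [min_eq_right hy.2.le, max_eq_right hy.1.le]
    rw [h2]
    exact h1.measurable.indicator measurableSet_Ioo
  have hkm : AEStronglyMeasurable k (volume.restrict (uIoc (0:ℝ) 1)) := hk.def'.aestronglyMeasurable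
  have hint : ∀ t : ℝ, IntervalIntegrable (fun s => k s * φ (max 0 (min 1 (t - s)))) volume 0 1 :=
    fun t => hk.mul_continuousOn (hΦc.comp (continuous_const.sub continuous_id)).continuousOn
  refine (intervalIntegral.hasDerivAt_integral_of_dominated_loc_of_lip
    (s := univ) (bound := fun s => C * |k s|) univ_mem
    (Eventually.of_forall fun t => (hint t).def'.aestronglyMeasurable) (hint t) ?_ ?_ ?_ ?_).2
  · exact hkm.mul (hmeas.comp (measurable_const.sub measurable_id)).aestronglyMeasurable
  · refine Eventually.of_forall fun s _ => LipschitzOnWith.of_dist_le_mul fun y _ z _ => ?_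
    simp only [Real.dist_eq, Real.coe_nnabs, ← mul_sub, abs_mul, abs_abs, abs_of_nonneg hC0]
    have := hΦlip (y - s) (z - s)
    rw [sub_sub_sub_cancel_right] at this
    calc _ ≤ |k s| * (C * |y - z|) := mul_le_mul_of_nonneg_left this (abs_nonneg _)
      _ = _ := by ring
  · exact hk.abs.const_mul C
  · have hne : ∀ a : ℝ, ∀ᵐ s : ℝ, s ≠ a := fun a => by simp [ae_iff]
    filter_upwards [hne t, hne (t - 1)] with s h0 h1 _
    refine HasDerivAt.const_mul _ ?_
    suffices h : HasDerivAt (fun y => φ (max 0 (min 1 y)))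
        ((Ioo (0:ℝ) 1).indicator φ' (t - s)) (t - s) from h.comp_sub_const t s
    generalize hy : t - s = y
    have hy0 : y ≠ 0 := fun h => h0 (by linarith)
    have hy1 : y ≠ 1 := fun h => h1 (by linarith)
    rcases lt_or_gt_of_ne hy0 with hlt | hgt
    · rw [indicator_of_notMem (fun h => by linarith [h.1])]
      refine (hasDerivAt_const y (φ 0)).congr_of_eventuallyEq ?_
      filter_upwards [Iio_mem_nhds hlt] with z hz
      rw [max_eq_left ((min_le_right _ _).trans (le_of_lt hz))]
    · rcases lt_or_gt_of_ne hy1 with hlt1 | hgt1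
      · rw [indicator_of_mem (show y ∈ Ioo (0:ℝ) 1 from ⟨hgt, hlt1⟩)]
        refine ((hφ y ⟨hgt.le, hlt1.le⟩).hasDerivAt (Icc_mem_nhds hgt hlt1)).congr_of_eventuallyEq ?_
        filter_upwards [Ioo_mem_nhds hgt hlt1] with z hz
        rw [min_eq_right hz.2.le, max_eq_right hz.1.le]
      · rw [indicator_of_notMem (fun h => by linarith [h.2])]
        refine (hasDerivAt_const y (φ 1)).congr_of_eventuallyEq ?_
        filter_upwards [Ioi_mem_nhds hgt1] with z hz
        rw [min_eq_left (le_of_lt hz), max_eq_right zero_le_one]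

open MeasureTheory in
lemma intervalIntegrable_one_sub_rpow {p : ℝ} (hp : -1 < p) :
    IntervalIntegrable (fun s : ℝ => (1 - s) ^ p) volume 0 1 := by
  simpa using ((intervalIntegral.intervalIntegrable_rpow' (a := 0) (b := 1) hp).comp_sub_left 1).symm

lemma abs_integral_le_of_le_one_sub_rpow {p M : ℝ} (hp : -1 < p) {k : ℝ → ℝ}
    (h : ∀ s ∈ Ioc (0:ℝ) 1, |k s| ≤ M * (1 - s) ^ p) :
    |∫ s in (0:ℝ)..1, k s| ≤ M / (p + 1) := by
  have h1 := intervalIntegral.norm_integral_le_of_norm_le (f := k) (zero_le_one' ℝ)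
    (Filter.Eventually.of_forall h) ((intervalIntegrable_one_sub_rpow hp).const_mul M)
  have h2 : ∫ s in (0:ℝ)..1, (1 - s) ^ p = 1 / (p + 1) := by
    rw [intervalIntegral.integral_comp_sub_left (fun s => s ^ p), integral_rpow (Or.inl hp)]
    simp [Real.zero_rpow (by linarith : p + 1 ≠ 0)]
  rw [intervalIntegral.integral_const_mul, h2] at h1
  simpa [div_eq_mul_inv] using h1

open MeasureTheory in
/-- The singular part of the second kernel, with the singularity moved from the diagonal to the
fixed point `u = 0` by `u = t - s`; since `x(0) = 0`, the clamped `x` vanishes for `u > t`. -/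
lemma integral_singular_eq {p : ℝ} {x : ℝ → ℝ} (hx0 : x 0 = 0) {t : ℝ} (ht : t ∈ Icc (0:ℝ) 1) :
    ∫ s in (0:ℝ)..1, (if s ≤ t then (t - s) ^ p else 0) * x s
      = ∫ u in (0:ℝ)..1, u ^ p * x (max 0 (min 1 (t - u))) := by
  have h1 : ∫ s in (0:ℝ)..1, (if s ≤ t then (t - s) ^ p else 0) * x s
      = ∫ s in (0:ℝ)..t, (t - s) ^ p * x s := by
    rw [← intervalIntegral.integral_indicator ht]
    congr 1 with s
    by_cases h : s ≤ t <;> simp [indicator, h]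
  have h2 : ∫ u in (0:ℝ)..1, u ^ p * x (max 0 (min 1 (t - u)))
      = ∫ u in (0:ℝ)..t, u ^ p * x (t - u) := by
    rw [← intervalIntegral.integral_indicator ht]
    refine intervalIntegral.integral_congr fun u hu => ?_
    rw [uIcc_of_le zero_le_one] at hu
    by_cases h : u ≤ t
    · have h3 : min 1 (t - u) = t - u := min_eq_right (by linarith [hu.1, ht.2])
      simp [indicator, h, h3]
    · have h3 : max 0 (min 1 (t - u)) = 0 :=
        max_eq_left ((min_le_right _ _).trans (by linarith))
      simp [indicator, h, h3, hx0]
  rw [h1, h2]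
  simpa using (intervalIntegral.integral_comp_sub_left (a := 0) (b := t)
    (fun u => u ^ p * x (t - u)) t)

open MeasureTheory in
lemma intervalIntegrable_singular {p : ℝ} (hp : -1 < p) {x : ℝ → ℝ}
    (hx : ContinuousOn x (Icc 0 1)) {t : ℝ} (ht : t ∈ Icc (0:ℝ) 1) :
    IntervalIntegrable (fun s => (if s ≤ t then (t - s) ^ p else 0) * x s) volume 0 1 := by
  refine IntervalIntegrable.mul_continuousOn ?_ (by rwa [uIcc_of_le zero_le_one])
  have h1 : IntervalIntegrable (fun s : ℝ => (t - s) ^ p) volume 0 t := by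
    simpa using
      ((intervalIntegral.intervalIntegrable_rpow' (a := 0) (b := t) hp).comp_sub_left t).symm
  refine IntervalIntegrable.trans (b := t) (h1.congr fun s hs => ?_)
    ((intervalIntegrable_const (c := (0:ℝ))).congr fun s hs => ?_)
  · rw [uIoc_of_le ht.1] at hs
    simp [hs.2]
  · rw [uIoc_of_le ht.2] at hs
    simp [not_le.2 hs.1]

/-! ### Suprema and the polynomial factors of the kernels -/

lemma le_iSup_Icc {g : ℝ → ℝ} (hg : ContinuousOn g (Icc 0 1)) {t : ℝ} (ht : t ∈ Icc (0:ℝ) 1) :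
    g t ≤ ⨆ t : Icc (0:ℝ) 1, g t := by
  refine le_ciSup (f := fun t : Icc (0:ℝ) 1 => g t) ?_ ⟨t, ht⟩
  obtain ⟨C, hC⟩ := isCompact_Icc.bddAbove_image hg
  exact ⟨C, by rintro _ ⟨s, rfl⟩; exact hC ⟨s, s.2, rfl⟩⟩

lemma hasDerivAt_poly_first {α : ℝ} (hα : 0 < α) (t : ℝ) :
    HasDerivAt (fun t : ℝ => (α + 1) * t ^ (α + 2) - (α + 2) * t ^ (α + 1))
      ((α + 1) * (α + 2) * (t ^ (α + 1) - t ^ α)) t := by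
  have h1 := Real.hasDerivAt_rpow_const (x := t) (p := α + 1) (Or.inr (by linarith))
  have h2 := Real.hasDerivAt_rpow_const (x := t) (p := α + 2) (Or.inr (by linarith))
  rw [add_sub_cancel_right] at h1
  rw [show α + 2 - 1 = α + 1 by ring] at h2
  refine ((h2.const_mul (α + 1)).sub (h1.const_mul (α + 2))).congr_deriv ?_
  ring

lemma hasDerivAt_poly_second {α : ℝ} (hα : 0 < α) (t : ℝ) :
    HasDerivAt (fun t : ℝ => t ^ (α + 1) - t ^ (α + 2))
      ((α + 1) * t ^ α - (α + 2) * t ^ (α + 1)) t := by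
  have h1 := Real.hasDerivAt_rpow_const (x := t) (p := α + 1) (Or.inr (by linarith))
  have h2 := Real.hasDerivAt_rpow_const (x := t) (p := α + 2) (Or.inr (by linarith))
  rw [add_sub_cancel_right] at h1
  rw [show α + 2 - 1 = α + 1 by ring] at h2
  exact h1.sub h2

lemma abs_poly_first_deriv_le {α t : ℝ} (hα : 0 < α) (ht : t ∈ Icc (0:ℝ) 1) :
    |(α + 1) * (α + 2) * (t ^ (α + 1) - t ^ α)| ≤ (α + 1) * (α + 2) := by
  have h0 := Real.rpow_nonneg ht.1 α
  have h1 := Real.rpow_le_one ht.1 ht.2 hα.le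
  have h2 := Real.rpow_nonneg ht.1 (α + 1)
  have h3 := Real.rpow_le_one ht.1 ht.2 (by linarith : 0 ≤ α + 1)
  rw [abs_mul, abs_of_pos (by positivity)]
  exact mul_le_of_le_one_right (by positivity) (abs_le.2 ⟨by linarith, by linarith⟩)

lemma abs_poly_second_deriv_le {α t : ℝ} (hα : 0 < α) (ht : t ∈ Icc (0:ℝ) 1) :
    |(α + 1) * t ^ α - (α + 2) * t ^ (α + 1)| ≤ α + 1 := by
  have h0 := Real.rpow_nonneg ht.1 α
  have h1 := Real.rpow_le_one ht.1 ht.2 hα.le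
  rw [Real.rpow_add_one' ht.1 (by linarith)]
  generalize t ^ α = T at *
  -- the quantity is `T * ((α + 1) - (α + 2) * t)`, whose second factor lies in `[-1, α + 1]`
  have h2 : 0 ≤ T * t := mul_nonneg h0 ht.1
  have h3 : T * t ≤ T := mul_le_of_le_one_right h0 ht.2
  rw [abs_le]
  constructor <;> nlinarith

/-! ### The two parts of the operator -/

open MeasureTheory in
/-- The `f`-part of the operator: its derivative exists and is controlled by the sup norm of the
forcing `g`. -/
lemma green_G_part {α β M : ℝ} (hα0 : 0 < α) (hβ2 : 2 < β) (hβ3 : β ≤ 3) {g : ℝ → ℝ}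
    (hg : ContinuousOn g (Icc 0 1)) (hM : ∀ s ∈ Icc (0:ℝ) 1, |g s| ≤ M) :
    ∀ t ∈ Icc (0:ℝ) 1, ∃ D : ℝ,
      HasDerivWithinAt (fun t => ∫ s in (0:ℝ)..1, GreenG α β t s * g s) D (Icc 0 1) t ∧
      |D| ≤ M * ((2 * α + 4) / Real.Gamma (α + β)
        + 2 * (α + 1) * (α + 2) / Real.Gamma (α + β + 1)) := by
  intro t ht
  have hM0 : 0 ≤ M := (abs_nonneg _).trans (hM 0 (by simp))
  have hgi : ContinuousOn g (uIcc 0 1) := by rwa [uIcc_of_le zero_le_one]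
  set q := α + β - 1 with hq
  have hq1 : 1 < q := by linarith
  rw [show α + β = q + 1 by linarith]
  have hpow : ∀ p : ℝ, 0 ≤ p → Continuous fun s : ℝ => s ^ p := fun p hp =>
    Real.continuous_rpow_const hp
  have hA := hasDerivAt_clamped_convolution (φ := fun y => y ^ q) (φ' := fun y => q * y ^ (q - 1))
    (C := q) (k := g)
    (fun y _ => (Real.hasDerivAt_rpow_const (Or.inr hq1.le)).hasDerivWithinAt)
    ((hpow (q - 1) (by linarith)).const_mul q).continuousOn
    (fun y hy => by
      rw [abs_of_nonneg (mul_nonneg (by linarith) (Real.rpow_nonneg hy.1 _))]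
      exact mul_le_of_le_one_right (by linarith)
        (Real.rpow_le_one hy.1 hy.2 (by linarith)))
    hgi.intervalIntegrable t
  have hA' : |∫ s in (0:ℝ)..1, g s * (Ioo (0:ℝ) 1).indicator (fun y => q * y ^ (q - 1)) (t - s)|
      ≤ M * q := by
    have := intervalIntegral.norm_integral_le_of_norm_le_const (a := (0:ℝ)) (b := 1) (C := M * q)
      (f := fun s => g s * (Ioo (0:ℝ) 1).indicator (fun y => q * y ^ (q - 1)) (t - s)) ?_
    · simpa using this
    intro s hs
    rw [uIoc_of_le zero_le_one] at hs
    rw [norm_mul]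
    refine mul_le_mul (hM s ⟨hs.1.le, hs.2⟩) ?_ (norm_nonneg _) hM0
    by_cases h : t - s ∈ Ioo (0:ℝ) 1
    · rw [indicator_of_mem h, Real.norm_eq_abs,
        abs_of_nonneg (mul_nonneg (by linarith) (Real.rpow_nonneg h.1.le _))]
      exact mul_le_of_le_one_right (by linarith)
        (Real.rpow_le_one h.1.le h.2.le (by linarith))
    · rw [indicator_of_notMem h, norm_zero]
      linarith
  generalize (∫ s in (0:ℝ)..1, g s * (Ioo (0:ℝ) 1).indicator
    (fun y => q * y ^ (q - 1)) (t - s)) = A' at hA hA'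
  have hbd : ∀ p : ℝ, -1 < p → |∫ s in (0:ℝ)..1, (1 - s) ^ p * g s| ≤ M / (p + 1) := fun p hp =>
    abs_integral_le_of_le_one_sub_rpow hp fun s hs => by
      have h0 : 0 ≤ (1 - s) ^ p := Real.rpow_nonneg (by linarith [hs.2]) _
      rw [abs_mul, abs_of_nonneg h0, mul_comm]
      exact mul_le_mul_of_nonneg_right (hM s ⟨hs.1.le, hs.2⟩) h0
  have hc1 := hbd q (by linarith)
  have hc2 := hbd (q - 1) (by linarith)
  have hi : ∀ p : ℝ, -1 < p → IntervalIntegrable (fun s => (1 - s) ^ p * g s) volume 0 1 :=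
    fun p hp => (intervalIntegrable_one_sub_rpow hp).mul_continuousOn hgi
  have hi1 := hi q (by linarith)
  have hi2 := hi (q - 1) (by linarith)
  have heq : ∀ t ∈ Icc (0:ℝ) 1, ∫ s in (0:ℝ)..1, GreenG α β t s * g s
      = 1 / Real.Gamma (q + 1) * ((∫ s in (0:ℝ)..1, g s * (max 0 (min 1 (t - s))) ^ q)
        + ((α + 1) * t ^ (α + 2) - (α + 2) * t ^ (α + 1)) * (∫ s in (0:ℝ)..1, (1 - s) ^ q * g s)
        + q * (t ^ (α + 1) - t ^ (α + 2)) * (∫ s in (0:ℝ)..1, (1 - s) ^ (q - 1) * g s)) := by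
    intro t ht
    have hi0 : IntervalIntegrable (fun s => g s * (max 0 (min 1 (t - s))) ^ q) volume 0 1 :=
      (hgi.mul ((hpow q (by linarith)).comp
        (by fun_prop : Continuous fun s : ℝ => max 0 (min 1 (t - s)))).continuousOn).intervalIntegrable
    rw [← intervalIntegral.integral_const_mul, ← intervalIntegral.integral_const_mul,
      ← intervalIntegral.integral_add hi0 (hi1.const_mul _),
      ← intervalIntegral.integral_add (hi0.add (hi1.const_mul _)) (hi2.const_mul _),
      ← intervalIntegral.integral_const_mul]
    refine intervalIntegral.integral_congr fun s hs => ?_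
    rw [uIcc_of_le zero_le_one] at hs
    have hk : (if s ≤ t then (t - s) ^ q else 0) = (max 0 (min 1 (t - s))) ^ q := by
      by_cases h : s ≤ t
      · rw [if_pos h, min_eq_right (by linarith [hs.1, ht.2]), max_eq_right (by linarith)]
      · rw [if_neg h, max_eq_left ((min_le_right _ _).trans (by linarith)),
          Real.zero_rpow (by linarith)]
    simp only [GreenG]
    rw [← hq, hk, show α + β = q + 1 by linarith, show q + 1 - 2 = q - 1 by ring]
    ring
  generalize (∫ s in (0:ℝ)..1, (1 - s) ^ q * g s) = c₁ at hc1 heq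
  generalize (∫ s in (0:ℝ)..1, (1 - s) ^ (q - 1) * g s) = c₂ at hc2 heq
  refine ⟨_, HasDerivWithinAt.congr (HasDerivAt.hasDerivWithinAt
    (((hA.add ((hasDerivAt_poly_first hα0 t).mul_const c₁)).add
      (((hasDerivAt_poly_second hα0 t).const_mul q).mul_const c₂)).const_mul _)) heq (heq t ht), ?_⟩
  have hp1 := abs_poly_first_deriv_le hα0 ht
  have hp2 := abs_poly_second_deriv_le hα0 ht
  generalize (α + 1) * (α + 2) * (t ^ (α + 1) - t ^ α) = P₁ at *
  generalize (α + 1) * t ^ α - (α + 2) * t ^ (α + 1) = P₂ at *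
  have hΓ : 0 < Real.Gamma (q + 1) := Real.Gamma_pos_of_pos (by linarith)
  rw [Real.Gamma_add_one (s := q + 1) (by linarith), abs_mul, abs_of_pos (by positivity)]
  have e1 : |P₁ * c₁| ≤ (α + 1) * (α + 2) * (M / (q + 1)) := by
    rw [abs_mul]; exact mul_le_mul hp1 hc1 (abs_nonneg _) (by positivity)
  have e2 : |q * P₂ * c₂| ≤ (α + 1) * M := by
    rw [abs_mul, abs_mul, abs_of_pos (by linarith : 0 < q)]
    calc q * |P₂| * |c₂| ≤ q * (α + 1) * (M / (q - 1 + 1)) := by gcongr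
      _ = (α + 1) * M := by
        rw [sub_add_cancel]
        have : q ≠ 0 := by linarith
        field_simp
  have e3 : |A' + P₁ * c₁ + q * P₂ * c₂|
      ≤ M * (2 * α + 4) + 2 * ((α + 1) * (α + 2) * (M / (q + 1))) := by
    have := abs_add_three A' (P₁ * c₁) (q * P₂ * c₂)
    have h5 : 0 ≤ (α + 1) * (α + 2) * (M / (q + 1)) := (abs_nonneg _).trans e1
    -- the crude bound `q * M` for the first term suffices because `q + (α + 1) ≤ 2 * α + 4`
    have h6 : M * q + (α + 1) * M ≤ M * (2 * α + 4) := by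
      nlinarith [mul_nonneg hM0 (by linarith : 0 ≤ 3 - β)]
    linarith
  calc _ ≤ 1 / Real.Gamma (q + 1)
        * (M * (2 * α + 4) + 2 * ((α + 1) * (α + 2) * (M / (q + 1)))) := by gcongr
    _ = _ := by
      have : q + 1 ≠ 0 := by linarith
      field_simp

open MeasureTheory in
/-- The linear part of the operator. Both boundary conditions are used: `x(0) = 0` removes the
boundary term when the Abel integral is differentiated, and `x(1) = 0` gives `|x(s)| ≤ R' (1 - s)`,
which makes the nonintegrable weight `(1 - s) ^ (α - 2)` harmless. -/
lemma green_H_part {α γ r R R' : ℝ} (hα0 : 0 < α) (hα1 : α ≤ 1) {x x' : ℝ → ℝ}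
    (hx : ∀ t ∈ Icc (0:ℝ) 1, HasDerivWithinAt x (x' t) (Icc (0:ℝ) 1) t)
    (hx'c : ContinuousOn x' (Icc 0 1)) (hx0 : x 0 = 0) (hx1 : x 1 = 0)
    (hR : ∀ s ∈ Icc (0:ℝ) 1, |x s| ≤ R) (hR' : ∀ s ∈ Icc (0:ℝ) 1, |x' s| ≤ R')
    (hr : R + R' ≤ r) :
    ∀ t ∈ Icc (0:ℝ) 1, ∃ D : ℝ,
      HasDerivWithinAt (fun t => ∫ s in (0:ℝ)..1, GreenH α γ t s * x s) D (Icc 0 1) t ∧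
      |D| ≤ r * (|γ| * (2 * α + 4) / Real.Gamma α
        + 2 * |γ| * (α + 1) * (α + 2) / Real.Gamma (α + 1)) := by
  intro t ht
  have hR0 : 0 ≤ R := (abs_nonneg _).trans (hR 0 (by simp))
  have hR'0 : 0 ≤ R' := (abs_nonneg _).trans (hR' 0 (by simp))
  have hxc : ContinuousOn x (Icc 0 1) := fun y hy => (hx y hy).continuousWithinAt
  have hxi : ContinuousOn x (uIcc 0 1) := by rwa [uIcc_of_le zero_le_one]
  have hB := hasDerivAt_clamped_convolution hx hx'c hR'
    (intervalIntegral.intervalIntegrable_rpow' (r := α - 1) (by linarith)) t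
  have hB' : |∫ s in (0:ℝ)..1, s ^ (α - 1) * (Ioo (0:ℝ) 1).indicator x' (t - s)| ≤ R' / α := by
    have h1 := abs_integral_le_of_le_one_sub_rpow (p := α - 1) (M := R') (by linarith)
      (k := fun s => (1 - s) ^ (α - 1) * (Ioo (0:ℝ) 1).indicator x' (t - (1 - s))) ?_
    · rw [intervalIntegral.integral_comp_sub_left
        (fun s => s ^ (α - 1) * (Ioo (0:ℝ) 1).indicator x' (t - s))] at h1
      simpa using h1
    intro s hs
    have h0 : 0 ≤ (1 - s) ^ (α - 1) := Real.rpow_nonneg (by linarith [hs.2]) _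
    rw [abs_mul, abs_of_nonneg h0, mul_comm]
    refine mul_le_mul_of_nonneg_right ?_ h0
    by_cases h : t - (1 - s) ∈ Ioo (0:ℝ) 1
    · rw [indicator_of_mem h]
      exact hR' _ ⟨h.1.le, h.2.le⟩
    · rwa [indicator_of_notMem h, abs_zero]
  generalize (∫ s in (0:ℝ)..1, s ^ (α - 1) * (Ioo (0:ℝ) 1).indicator x' (t - s)) = B' at hB hB'
  have hd1 : |∫ s in (0:ℝ)..1, (1 - s) ^ (α - 1) * x s| ≤ R / (α - 1 + 1) :=
    abs_integral_le_of_le_one_sub_rpow (by linarith) fun s hs => by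
      have h0 : 0 ≤ (1 - s) ^ (α - 1) := Real.rpow_nonneg (by linarith [hs.2]) _
      rw [abs_mul, abs_of_nonneg h0, mul_comm]
      exact mul_le_mul_of_nonneg_right (hR s ⟨hs.1.le, hs.2⟩) h0
  have hdom : ∀ s ∈ Ioc (0:ℝ) 1, |(1 - s) ^ (α - 2) * x s| ≤ R' * (1 - s) ^ (α - 1) := by
    intro s hs
    rcases eq_or_lt_of_le hs.2 with rfl | hs1
    · rw [hx1, mul_zero, abs_zero]
      exact mul_nonneg hR'0 (Real.rpow_nonneg (by simp) _)
    · have h1 := (convex_Icc (0:ℝ) 1).norm_image_sub_le_of_norm_hasDerivWithin_le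
        (f := x) (f' := x') (C := R') hx (fun w hw => by simpa using hR' w hw)
        (show (1:ℝ) ∈ Icc (0:ℝ) 1 by simp) (show s ∈ Icc (0:ℝ) 1 from ⟨hs.1.le, hs.2⟩)
      rw [hx1, sub_zero, Real.norm_eq_abs, Real.norm_eq_abs, abs_sub_comm,
        abs_of_pos (sub_pos.2 hs1)] at h1
      have h0 : 0 ≤ (1 - s) ^ (α - 2) := Real.rpow_nonneg (by linarith) _
      rw [abs_mul, abs_of_nonneg h0, show α - 1 = α - 2 + 1 by ring,
        Real.rpow_add_one (sub_pos.2 hs1).ne']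
      calc _ ≤ (1 - s) ^ (α - 2) * (R' * (1 - s)) := mul_le_mul_of_nonneg_left h1 h0
        _ = _ := by ring
  have hd2 : |∫ s in (0:ℝ)..1, (1 - s) ^ (α - 2) * x s| ≤ R' / (α - 1 + 1) :=
    abs_integral_le_of_le_one_sub_rpow (by linarith) hdom
  rw [sub_add_cancel] at hd1 hd2
  have hi1 : IntervalIntegrable (fun s => (1 - s) ^ (α - 1) * x s) volume 0 1 :=
    (intervalIntegrable_one_sub_rpow (by linarith)).mul_continuousOn hxi
  have hi2 : IntervalIntegrable (fun s => (1 - s) ^ (α - 2) * x s) volume 0 1 := by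
    refine ((intervalIntegrable_one_sub_rpow (p := α - 1) (by linarith)).const_mul R').mono_fun' ?_ ?_
    · refine AEStronglyMeasurable.mul ?_ ?_
      · exact (Measurable.pow_const (by fun_prop) _).aestronglyMeasurable
      · exact hxi.intervalIntegrable.def'.aestronglyMeasurable
    · rw [Filter.EventuallyLE, ae_restrict_iff' measurableSet_uIoc, uIoc_of_le zero_le_one]
      exact Filter.Eventually.of_forall hdom
  have heq : ∀ t ∈ Icc (0:ℝ) 1, ∫ s in (0:ℝ)..1, GreenH α γ t s * x s
      = γ / Real.Gamma α * (-(∫ u in (0:ℝ)..1, u ^ (α - 1) * x (max 0 (min 1 (t - u))))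
        - ((α + 1) * t ^ (α + 2) - (α + 2) * t ^ (α + 1))
          * (∫ s in (0:ℝ)..1, (1 - s) ^ (α - 1) * x s)
        - (α - 1) * (t ^ (α + 1) - t ^ (α + 2))
          * (∫ s in (0:ℝ)..1, (1 - s) ^ (α - 2) * x s)) := by
    intro t ht
    have hi0 : IntervalIntegrable
        (fun s => -((if s ≤ t then (t - s) ^ (α - 1) else 0) * x s)) volume 0 1 :=
      (intervalIntegrable_singular (by linarith) hxc ht).neg
    rw [← integral_singular_eq hx0 ht, ← intervalIntegral.integral_const_mul,
      ← intervalIntegral.integral_const_mul, ← intervalIntegral.integral_neg,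
      ← intervalIntegral.integral_sub hi0 (hi1.const_mul _),
      ← intervalIntegral.integral_sub (hi0.sub (hi1.const_mul _)) (hi2.const_mul _),
      ← intervalIntegral.integral_const_mul]
    refine intervalIntegral.integral_congr fun s hs => ?_
    simp only [GreenH]
    ring
  generalize (∫ s in (0:ℝ)..1, (1 - s) ^ (α - 1) * x s) = d₁ at hd1 heq
  generalize (∫ s in (0:ℝ)..1, (1 - s) ^ (α - 2) * x s) = d₂ at hd2 heq
  refine ⟨_, HasDerivWithinAt.congr (HasDerivAt.hasDerivWithinAt
    (((hB.neg.sub ((hasDerivAt_poly_first hα0 t).mul_const d₁)).sub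
      (((hasDerivAt_poly_second hα0 t).const_mul (α - 1)).mul_const d₂)).const_mul _))
    heq (heq t ht), ?_⟩
  have hp1 := abs_poly_first_deriv_le hα0 ht
  have hp2 := abs_poly_second_deriv_le hα0 ht
  generalize (α + 1) * (α + 2) * (t ^ (α + 1) - t ^ α) = P₁ at *
  generalize (α + 1) * t ^ α - (α + 2) * t ^ (α + 1) = P₂ at *
  have hΓ : 0 < Real.Gamma α := Real.Gamma_pos_of_pos hα0
  rw [Real.Gamma_add_one hα0.ne', abs_mul, abs_div, abs_of_pos hΓ]
  have e1 : |P₁ * d₁| ≤ (α + 1) * (α + 2) * (R / α) := by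
    rw [abs_mul]; exact mul_le_mul hp1 hd1 (abs_nonneg _) (by positivity)
  have e2 : |(α - 1) * P₂ * d₂| ≤ (α + 1) * (R' / α) := by
    rw [abs_mul, abs_mul]
    have h1 : |α - 1| ≤ 1 := abs_le.2 ⟨by linarith, by linarith⟩
    calc |α - 1| * |P₂| * |d₂| ≤ 1 * (α + 1) * (R' / α) := by gcongr
      _ = _ := by ring
  have e3 : |-B' - P₁ * d₁ - (α - 1) * P₂ * d₂|
      ≤ r * (2 * α + 4) + 2 * ((α + 1) * (α + 2) * (r / α)) := by
    have h1 := abs_sub (-B' - P₁ * d₁) ((α - 1) * P₂ * d₂)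
    have h2 := abs_sub (-B') (P₁ * d₁)
    rw [abs_neg] at h2
    have hr0 : 0 ≤ r := by linarith
    have h3 : R / α + R' / α ≤ r / α := by rw [← add_div]; gcongr
    have h4 : 0 ≤ R / α := by positivity
    have h5 : 0 ≤ R' / α := by positivity
    have h6 : 0 ≤ r * (2 * α + 4) := by positivity
    have h7 : (α + 1) * (α + 2) * (R / α + R' / α) ≤ (α + 1) * (α + 2) * (r / α) := by gcongr
    nlinarith [mul_nonneg (mul_nonneg hα0.le hα0.le) h5, mul_nonneg hα0.le h5,
      mul_nonneg (mul_nonneg hα0.le hα0.le) h4, mul_nonneg hα0.le h4]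
  calc _ ≤ |γ| / Real.Gamma α
        * (r * (2 * α + 4) + 2 * ((α + 1) * (α + 2) * (r / α))) := by gcongr
    _ = _ := by field_simp

theorem deriv_estimate (α β γ : ℝ) (hα0 : 0 < α) (hα1 : α ≤ 1)
    (hβ2 : 2 < β) (hβ3 : β ≤ 3) (f : ℝ → ℝ → ℝ → ℝ)
    (hf : ContinuousOn (fun p : ℝ × ℝ × ℝ => f p.1 p.2.1 p.2.2)
      (Set.Icc 0 1 ×ˢ (Set.univ : Set (ℝ × ℝ))))
    (σ : ℝ → ℝ) (hσc : ContinuousOn σ (Set.Icc 0 1))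
    (hσ0 : ∀ t ∈ Set.Icc (0:ℝ) 1, 0 ≤ σ t)
    (a₁ a₂ : ℝ) (ha₁ : 0 ≤ a₁) (ha₂ : 0 ≤ a₂)
    (τ₁ τ₂ : ℝ) (hτ₁ : τ₁ ∈ Set.Ioo (0:ℝ) 1) (hτ₂ : τ₂ ∈ Set.Ioo (0:ℝ) 1)
    (hgrowth : ∀ t ∈ Set.Icc (0:ℝ) 1, ∀ u v : ℝ,
      |f t u v| ≤ σ t + a₁ * |u| ^ τ₁ + a₂ * |v| ^ τ₂)
    (σnorm K₂ L₂ : ℝ)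
    (hσnorm : σnorm = ⨆ t : Set.Icc (0:ℝ) 1, σ t)
    (hK₂ : K₂ = (2 * α + 4) / Real.Gamma (α + β)
      + 2 * (α + 1) * (α + 2) / Real.Gamma (α + β + 1))
    (hL₂ : L₂ = |γ| * (2 * α + 4) / Real.Gamma α
      + 2 * |γ| * (α + 1) * (α + 2) / Real.Gamma (α + 1))
    (r : ℝ) (hr : 0 < r) (x x' : ℝ → ℝ)
    (hx : ∀ t ∈ Set.Icc (0:ℝ) 1, HasDerivWithinAt x (x' t) (Set.Icc (0:ℝ) 1) t)
    (hx'c : ContinuousOn x' (Set.Icc 0 1)) (hx0 : x 0 = 0) (hx1 : x 1 = 0)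
    (hxr : (⨆ t : Set.Icc (0:ℝ) 1, |x t|) + (⨆ t : Set.Icc (0:ℝ) 1, |x' t|) ≤ r)
    (Z : ℝ → ℝ)
    (hZ : ∀ t, Z t = (∫ s in (0:ℝ)..1, GreenG α β t s * f s (x s) (x' s))
        + ∫ s in (0:ℝ)..1, GreenH α γ t s * x s) :
    ∃ Z' : ℝ → ℝ,
      (∀ t ∈ Set.Icc (0:ℝ) 1, HasDerivWithinAt Z (Z' t) (Set.Icc (0:ℝ) 1) t) ∧
      ∀ t ∈ Set.Icc (0:ℝ) 1,
        |Z' t| ≤ (σnorm + a₁ * r ^ τ₁ + a₂ * r ^ τ₂) * K₂ + r * L₂ := by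
  have hxc : ContinuousOn x (Icc 0 1) := fun y hy => (hx y hy).continuousWithinAt
  have hR : ∀ s ∈ Icc (0:ℝ) 1, |x s| ≤ ⨆ t : Icc (0:ℝ) 1, |x t| :=
    fun s hs => le_iSup_Icc (g := fun s => |x s|) hxc.abs hs
  have hR' : ∀ s ∈ Icc (0:ℝ) 1, |x' s| ≤ ⨆ t : Icc (0:ℝ) 1, |x' t| :=
    fun s hs => le_iSup_Icc (g := fun s => |x' s|) hx'c.abs hs
  have hR0 := (abs_nonneg _).trans (hR 0 (by simp))
  have hR'0 := (abs_nonneg _).trans (hR' 0 (by simp))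
  have hg : ContinuousOn (fun s => f s (x s) (x' s)) (Icc 0 1) :=
    hf.comp (continuousOn_id.prodMk (hxc.prodMk hx'c)) fun s hs => ⟨hs, mem_univ _⟩
  have hM : ∀ s ∈ Icc (0:ℝ) 1,
      |f s (x s) (x' s)| ≤ σnorm + a₁ * r ^ τ₁ + a₂ * r ^ τ₂ := by
    intro s hs
    have h1 : σ s ≤ σnorm := hσnorm ▸ le_iSup_Icc hσc hs
    have h2 : |x s| ^ τ₁ ≤ r ^ τ₁ :=
      Real.rpow_le_rpow (abs_nonneg _) (by linarith [hR s hs]) hτ₁.1.le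
    have h3 : |x' s| ^ τ₂ ≤ r ^ τ₂ :=
      Real.rpow_le_rpow (abs_nonneg _) (by linarith [hR' s hs]) hτ₂.1.le
    refine (hgrowth s hs _ _).trans ?_
    gcongr
  have hG := green_G_part (α := α) hα0 hβ2 hβ3 hg hM
  have hH := green_H_part (γ := γ) hα0 hα1 hx hx'c hx0 hx1 hR hR' hxr
  rw [← hK₂] at hG
  rw [← hL₂] at hH
  choose! D₁ hD₁ hb₁ using hG
  choose! D₂ hD₂ hb₂ using hH
  refine ⟨fun t => D₁ t + D₂ t, fun t ht => ?_, fun t ht => ?_⟩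
  · rw [funext hZ]
    exact (hD₁ t ht).add (hD₂ t ht)
  · exact (abs_add_le _ _).trans (add_le_add (hb₁ t ht) (hb₂ t ht))
end

section
/- Assume f satisfies the growth condition (A₃) and let r > 0 satisfy 4K‖σ‖ ≤ r, (4a₁K)^{1/(1−τ₁)} ≤ r, (4a₂K)^{1/(1−τ₂)} ≤ r, and 4L ≤ 1. Then for every continuously differentiable x : [0,1] → ℝ with x(0) = x(1) = 0 and ‖x‖ ≤ r, the function (Zx)(t) = ∫₀¹ G(t,s)·f(s, x(s), x'(s)) ds + ∫₀¹ H(t,s)·x(s) ds is continuously differentiable on [0,1] and satisfies ‖Zx‖ = sup_{t∈[0,1]}|(Zx)(t)| + sup_{t∈[0,1]}|(Zx)'(t)| ≤ r. -/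
/-!
The operator splits as `Z x = ∫ G f + ∫ H x`. In both integrals the kernel is a convolution kernel
`(t - s)₊ ^ p` plus two terms in which `t` and `s` separate, so `C¹` regularity in `t` only has to be
checked for the convolution term; the separated terms are combinations of `t ^ (α + 1)` and
`t ^ (α + 2)` (`kernel_combination_C1`).

* For `G` the exponent is `α + β - 1 > 1`, the kernel itself is `C¹` in `t`, and one differentiates
  under the integral sign (`hasDerivAt_integral_max_rpow`).
* For `H` the exponent is `α - 1 ≤ 0` and the kernel is singular. Since `x 0 = 0`, extending `x` by
  zero to the left gives a Lipschitz function, and after the change of variables `s ↦ t - 1 + s` the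
  derivative falls on this extension (`fractional_integral_C1`). The even more singular factor
  `(1 - s) ^ (α - 2)` is integrable against `x` because `x 1 = 0` gives `|x s| ≤ ‖x'‖ (1 - s)`.

All integrals are then estimated by `∫ (1 - s) ^ q = 1 / (q + 1)`. With
`F = ‖σ‖ + a₁ r ^ τ₁ + a₂ r ^ τ₂`, the `G` part has `C¹` norm at most `K F ≤ 3 r / 4` and the `H`
part at most `L r ≤ r / 4`.
-/

open Set intervalIntegral

open MeasureTheory

/-! ### Weakly singular kernels on the unit interval -/

lemma hasDerivAt_max_rpow {p : ℝ} (hp : 1 < p) (u : ℝ) :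
    HasDerivAt (fun u : ℝ => max u 0 ^ p) (p * max u 0 ^ (p - 1)) u := by
  have hp0 : p ≠ 0 := by linarith
  have hp1 : p - 1 ≠ 0 := by linarith
  have hneg : ∀ u ≤ 0, HasDerivWithinAt (fun u : ℝ => max u 0 ^ p) (p * max u 0 ^ (p - 1))
      (Iic 0) u := by
    intro u hu
    rw [max_eq_right hu, Real.zero_rpow hp1, mul_zero]
    refine (hasDerivWithinAt_const u (Iic 0) (0 : ℝ)).congr (fun v hv => ?_) ?_
    · simp only [max_eq_right (mem_Iic.1 hv), Real.zero_rpow hp0]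
    · simp only [max_eq_right hu, Real.zero_rpow hp0]
  have hpos : ∀ u, 0 ≤ u → HasDerivWithinAt (fun u : ℝ => max u 0 ^ p) (p * max u 0 ^ (p - 1))
      (Ici 0) u := by
    intro u hu
    rw [max_eq_left hu]
    refine (Real.hasDerivAt_rpow_const (Or.inr hp.le)).hasDerivWithinAt.congr (fun v hv => ?_) ?_
    · simp only [max_eq_left (mem_Ici.1 hv)]
    · simp only [max_eq_left hu]
  rcases lt_trichotomy u 0 with h | rfl | h
  · exact (hneg u h.le).hasDerivAt (Iic_mem_nhds h)
  · have := (hneg 0 le_rfl).union (hpos 0 le_rfl)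
    rwa [Iic_union_Ici, hasDerivWithinAt_univ] at this
  · exact (hpos u h.le).hasDerivAt (Ici_mem_nhds h)

lemma continuous_max_sub_rpow {p : ℝ} (hp : 0 < p) :
    Continuous (fun z : ℝ × ℝ => max (z.1 - z.2) 0 ^ p) :=
  (((continuous_fst.sub continuous_snd).max continuous_const).rpow_const
    fun _ => Or.inr hp.le)

/-- For `p > 1` the truncated kernel `(t - s)₊ ^ p` is `C¹` in `t`, so its integral operator can be
differentiated under the integral sign. -/
lemma hasDerivAt_integral_max_rpow {p : ℝ} (hp : 1 < p) {φ : ℝ → ℝ} (hφ : Continuous φ) (t : ℝ) :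
    HasDerivAt (fun t => ∫ s in (0:ℝ)..1, max (t - s) 0 ^ p * φ s)
      (∫ s in (0:ℝ)..1, p * max (t - s) 0 ^ (p - 1) * φ s) t := by
  have hk : ∀ q : ℝ, 0 < q → ∀ t : ℝ, Continuous fun s : ℝ => max (t - s) 0 ^ q := fun q hq t =>
    (continuous_max_sub_rpow hq).comp (continuous_const.prodMk continuous_id)
  refine (intervalIntegral.hasDerivAt_integral_of_dominated_loc_of_deriv_le
    (bound := fun s => p * (|t - s| + 1) ^ (p - 1) * |φ s|)
    (F' := fun t s => p * max (t - s) 0 ^ (p - 1) * φ s)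
    (Metric.ball_mem_nhds t one_pos) ?_ ?_ ?_ ?_ ?_ ?_).2
  · exact Filter.Eventually.of_forall fun t => ((hk p (by linarith) t).mul hφ).aestronglyMeasurable
  · exact ((hk p (by linarith) t).mul hφ).intervalIntegrable _ _
  · exact ((continuous_const.mul (hk (p-1) (by linarith) t)).mul hφ).aestronglyMeasurable
  · refine Filter.Eventually.of_forall fun s _ v hv => ?_
    rw [norm_mul, Real.norm_eq_abs, Real.norm_eq_abs, abs_of_nonneg (by positivity)]
    have h1 : max (v - s) 0 ≤ |t - s| + 1 := by
      rw [Metric.mem_ball, Real.dist_eq] at hv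
      refine max_le ?_ (by positivity)
      have := abs_lt.1 hv
      linarith [le_abs_self (t - s)]
    have : 0 ≤ p - 1 := by linarith
    gcongr
  · refine Continuous.intervalIntegrable ?_ _ _
    refine (continuous_const.mul (Continuous.rpow_const (by fun_prop) fun _ => Or.inr (by linarith))).mul
      hφ.abs
  · refine Filter.Eventually.of_forall fun s _ v _ => ?_
    have := (hasDerivAt_max_rpow hp (v - s)).comp v ((hasDerivAt_id v).sub_const s)
    simpa [Function.comp_def] using this.mul_const (φ s)

lemma continuous_integral_max_rpow {p : ℝ} (hp : 0 < p) (c : ℝ) {φ : ℝ → ℝ} (hφ : Continuous φ) :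
    Continuous (fun t => ∫ s in (0:ℝ)..1, c * max (t - s) 0 ^ p * φ s) := by
  apply intervalIntegral.continuous_parametric_intervalIntegral_of_continuous'
  exact (continuous_const.mul (continuous_max_sub_rpow hp)).mul (hφ.comp continuous_snd)

lemma integral_one_sub_rpow {q : ℝ} (hq : -1 < q) :
    ∫ s in (0:ℝ)..1, (1 - s) ^ q = 1 / (q + 1) := by
  rw [intervalIntegral.integral_comp_sub_left (fun s => s ^ q) 1, integral_rpow (Or.inl hq)]
  have : q + 1 ≠ 0 := by linarith
  simp [Real.zero_rpow this]

lemma intervalIntegrable_sub_rpow {q : ℝ} (hq : -1 < q) (a b : ℝ) (t : ℝ) :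
    IntervalIntegrable (fun s : ℝ => (t - s) ^ q) volume a b := by
  have := (intervalIntegrable_rpow' (a := t - a) (b := t - b) hq).comp_sub_left t
  simpa using this

/-- Every integral estimate below has this form: all kernels are dominated by a multiple of
`(1 - s) ^ q`. The endpoint `s = 1`, where a negative power takes a junk value, is excluded. -/
lemma abs_integral_le_of_rpow {q M : ℝ} (hq : -1 < q) {g : ℝ → ℝ}
    (hg : ∀ s ∈ Ioo (0:ℝ) 1, |g s| ≤ M * (1 - s) ^ q) :
    |∫ s in (0:ℝ)..1, g s| ≤ M / (q + 1) := by
  have h := intervalIntegral.norm_integral_le_of_norm_le (f := g) (μ := volume)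
    (g := fun s => M * (1 - s) ^ q) zero_le_one ?_
    ((intervalIntegrable_sub_rpow hq 0 1 1).const_mul M)
  · rwa [intervalIntegral.integral_const_mul, integral_one_sub_rpow hq, mul_one_div] at h
  · filter_upwards [Measure.ae_ne volume 1] with s hs hs'
    exact hg s ⟨hs'.1, lt_of_le_of_ne hs'.2 hs⟩

lemma integral_three_terms {u v w : ℝ → ℝ} (hu : IntervalIntegrable u volume 0 1)
    (hv : IntervalIntegrable v volume 0 1) (hw : IntervalIntegrable w volume 0 1) (k P Q : ℝ) :
    ∫ s in (0:ℝ)..1, k * (u s + P * v s + Q * w s) =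
      k * ((∫ s in (0:ℝ)..1, u s) + P * (∫ s in (0:ℝ)..1, v s) + Q * ∫ s in (0:ℝ)..1, w s) := by
  rw [intervalIntegral.integral_const_mul,
    intervalIntegral.integral_add (hu.add (hv.const_mul P)) (hw.const_mul Q),
    intervalIntegral.integral_add hu (hv.const_mul P), intervalIntegral.integral_const_mul,
    intervalIntegral.integral_const_mul]

/-! ### Fractional integrals of `C¹` functions vanishing at `0` -/

/-- A `C¹` function `x` on `[0,1]` with `x 0 = 0` extends to a Lipschitz function `y` on `ℝ` that
vanishes on `(-∞, 0]` and is `C¹` away from `0`. Here `y` is the primitive of `d`, which is `x'`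
frozen at its endpoint value beyond `1` and cut off to `0` on the negative axis. -/
lemma exists_zero_extension {x x' : ℝ → ℝ} {M : ℝ}
    (hx : ∀ t ∈ Icc (0:ℝ) 1, HasDerivWithinAt x (x' t) (Icc (0:ℝ) 1) t)
    (hx' : ContinuousOn x' (Icc 0 1)) (hx0 : x 0 = 0) (hM : ∀ t ∈ Icc (0:ℝ) 1, |x' t| ≤ M) :
    ∃ y d : ℝ → ℝ, Measurable d ∧ (∀ v, |d v| ≤ M) ∧ (∀ v, v ≠ 0 → ContinuousAt d v) ∧
      (∀ v, v ≠ 0 → HasDerivAt y (d v) v) ∧ (∀ a b, |y a - y b| ≤ M * |a - b|) ∧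
      (∀ v ≤ 0, y v = 0) ∧ ∀ v ∈ Icc (0:ℝ) 1, y v = x v := by
  set e : ℝ → ℝ := IccExtend (zero_le_one (α := ℝ)) ((Icc (0:ℝ) 1).domRestrict x') with he
  have hec : Continuous e := (continuousOn_iff_continuous_domRestrict.1 hx').Icc_extend'
  have heM : ∀ v, |e v| ≤ M := fun v => hM _ (projIcc (0:ℝ) 1 zero_le_one v).2
  have hee : ∀ v ∈ Icc (0:ℝ) 1, e v = x' v := fun v hv => IccExtend_of_mem _ _ hv
  have hM0 : 0 ≤ M := (abs_nonneg _).trans (heM 0)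
  set d : ℝ → ℝ := (Ici (0:ℝ)).indicator e with hd
  have hdm : Measurable d := hec.measurable.indicator measurableSet_Ici
  have hdM : ∀ v, |d v| ≤ M := by
    intro v
    by_cases h : v ∈ Ici (0:ℝ)
    · rw [hd, indicator_of_mem h]; exact heM v
    · rw [hd, indicator_of_notMem h]; simpa using hM0
  have hdc : ∀ v, v ≠ 0 → ContinuousAt d v := by
    intro v hv
    rcases lt_or_gt_of_ne hv with h | h
    · refine (continuousAt_const (y := (0:ℝ))).congr ?_
      filter_upwards [Iio_mem_nhds h] with w hw
      rw [hd, indicator_of_notMem (by simpa using hw)]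
    · refine hec.continuousAt.congr ?_
      filter_upwards [Ioi_mem_nhds h] with w hw
      rw [hd, indicator_of_mem (by simpa using hw.le)]
  have hdi : ∀ a b, IntervalIntegrable d volume a b := by
    intro a b
    refine (intervalIntegrable_const (c := M)).mono_fun hdm.aestronglyMeasurable ?_
    refine Filter.Eventually.of_forall fun v => ?_
    simpa only [Real.norm_eq_abs, abs_of_nonneg hM0] using hdM v
  refine ⟨fun v => ∫ w in (0:ℝ)..v, d w, d, hdm, hdM, hdc, ?_, ?_, ?_, ?_⟩
  · intro v hv
    exact intervalIntegral.integral_hasDerivAt_right (hdi 0 v)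
      (hdm.stronglyMeasurable.stronglyMeasurableAtFilter) (hdc v hv)
  · intro a b
    rw [intervalIntegral.integral_interval_sub_left (hdi 0 a) (hdi 0 b)]
    rw [← Real.norm_eq_abs]
    exact intervalIntegral.norm_integral_le_of_norm_le_const fun w _ =>
      (Real.norm_eq_abs _).trans_le (hdM w)
  · intro v hv
    refine intervalIntegral.integral_zero_ae ?_
    filter_upwards [Measure.ae_ne volume 0] with w hw hw'
    rw [uIoc_of_ge hv] at hw'
    have : w < 0 := lt_of_le_of_ne hw'.2 hw
    rw [hd, indicator_of_notMem (by simpa using this)]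
  · intro v hv
    have hsub : Icc (0:ℝ) v ⊆ Icc 0 1 := Icc_subset_Icc_right hv.2
    have h1 : ∫ w in (0:ℝ)..v, d w = ∫ w in (0:ℝ)..v, x' w := by
      refine intervalIntegral.integral_congr fun w hw => ?_
      rw [uIcc_of_le hv.1] at hw
      rw [hd, indicator_of_mem (by simpa using hw.1)]
      exact hee w (hsub hw)
    have h2 := intervalIntegral.integral_eq_sub_of_hasDerivAt_of_le (f := x) (f' := x') hv.1
      (fun w hw => (hx w (hsub hw)).continuousWithinAt.mono hsub)
      (fun w hw => (hx w (hsub (Ioo_subset_Icc_self hw))).hasDerivAt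
        (Icc_mem_nhds hw.1 (hw.2.trans_le hv.2)))
      ((hx'.mono (by rwa [uIcc_of_le hv.1])).intervalIntegrable)
    simp only [h1, h2, hx0, sub_zero]

/-- The translation `s ↦ t - 1 + s` moves the `t`-dependence from the singular kernel to the zero
extension `y` of `x`. -/
lemma integral_ite_rpow_eq {q t : ℝ} (hq : -1 < q) (ht : t ∈ Icc (0:ℝ) 1) {x y : ℝ → ℝ}
    (hy : Continuous y) (hy0 : ∀ v ≤ 0, y v = 0) (hyx : ∀ v ∈ Icc (0:ℝ) 1, y v = x v) :
    IntervalIntegrable (fun s => (if s ≤ t then (t - s) ^ q else 0) * x s) volume 0 1 ∧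
    ∫ s in (0:ℝ)..1, (if s ≤ t then (t - s) ^ q else 0) * x s
      = ∫ s in (0:ℝ)..1, (1 - s) ^ q * y (t - 1 + s) := by
  have hint : ∀ a b, IntervalIntegrable (fun s => (t - s) ^ q * y s) volume a b := fun a b =>
    (intervalIntegrable_sub_rpow hq a b t).mul_continuousOn hy.continuousOn
  have c1 : EqOn (fun s => (t - s) ^ q * y s)
      (fun s => (if s ≤ t then (t - s) ^ q else 0) * x s) (uIoc 0 t) := by
    intro s hs
    rw [uIoc_of_le ht.1] at hs
    simp only [if_pos hs.2, hyx s ⟨hs.1.le, hs.2.trans ht.2⟩]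
  have c2 : EqOn (fun _ => (0:ℝ))
      (fun s => (if s ≤ t then (t - s) ^ q else 0) * x s) (uIoc t 1) := by
    intro s hs
    rw [uIoc_of_le ht.2] at hs
    simp only [if_neg (not_le.2 hs.1), zero_mul]
  have i1 := (hint 0 t).congr c1
  have i2 := (intervalIntegrable_const (c := (0:ℝ)) (a := t) (b := 1) (μ := volume)).congr c2
  refine ⟨i1.trans i2, ?_⟩
  rw [← intervalIntegral.integral_add_adjacent_intervals i1 i2,
    ← intervalIntegral.integral_congr_ae (Filter.Eventually.of_forall c1),
    ← intervalIntegral.integral_congr_ae (Filter.Eventually.of_forall c2)]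
  have h3 : ∫ s in (0:ℝ)..1, (1 - s) ^ q * y (t - 1 + s)
      = ∫ s in (t - 1)..t, (t - s) ^ q * y s := by
    have := intervalIntegral.integral_comp_add_left (a := 0) (b := 1)
      (fun s => (t - s) ^ q * y s) (t - 1)
    simp only [add_zero, sub_add_cancel] at this
    rw [← this]
    refine intervalIntegral.integral_congr fun s _ => ?_
    congr 2
    ring
  have h4 : ∫ s in (t - 1)..0, (t - s) ^ q * y s = 0 := by
    refine intervalIntegral.integral_zero_ae (Filter.Eventually.of_forall fun s hs => ?_)
    rw [uIoc_of_le (by linarith [ht.2])] at hs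
    rw [hy0 s hs.2, mul_zero]
  rw [h3, ← intervalIntegral.integral_add_adjacent_intervals (hint (t - 1) 0) (hint 0 t), h4]
  simp

/-- The fractional integral of a `C¹` function `x` with `x 0 = 0` is `C¹`, even for a singular
exponent `q < 0`: after the translation of `integral_ite_rpow_eq` only the Lipschitz function `y`
depends on `t`, and the derivative falls on it. -/
lemma fractional_integral_C1 {q M₀ M : ℝ} (hq : -1 < q) {x y d : ℝ → ℝ}
    (hdm : Measurable d) (hdM : ∀ v, |d v| ≤ M) (hdc : ∀ v, v ≠ 0 → ContinuousAt d v)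
    (hyd : ∀ v, v ≠ 0 → HasDerivAt y (d v) v) (hyl : ∀ a b, |y a - y b| ≤ M * |a - b|)
    (hyc : Continuous y)
    (hy0 : ∀ v ≤ 0, y v = 0) (hyx : ∀ v ∈ Icc (0:ℝ) 1, y v = x v)
    (hM₀ : ∀ t ∈ Icc (0:ℝ) 1, |x t| ≤ M₀) :
    ∃ D : ℝ → ℝ, Continuous D ∧
      (∀ t ∈ Icc (0:ℝ) 1, HasDerivWithinAt
        (fun t => ∫ s in (0:ℝ)..1, (if s ≤ t then (t - s) ^ q else 0) * x s) (D t) (Icc 0 1) t) ∧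
      (∀ t ∈ Icc (0:ℝ) 1,
        |∫ s in (0:ℝ)..1, (if s ≤ t then (t - s) ^ q else 0) * x s| ≤ M₀ / (q + 1)) ∧
      ∀ t, |D t| ≤ M / (q + 1) := by
  have hM0 : 0 ≤ M := (abs_nonneg _).trans (hdM 0)
  have hkm : Measurable fun s : ℝ => (1 - s) ^ q := by fun_prop
  have hki := intervalIntegrable_sub_rpow hq 0 1 1
  have hdm' : ∀ t, Measurable fun s => (1 - s) ^ q * d (t - 1 + s) := fun t =>
    hkm.mul (hdm.comp (by fun_prop))
  have hym' : ∀ t, Measurable fun s => (1 - s) ^ q * y (t - 1 + s) := fun t =>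
    hkm.mul (hyc.measurable.comp (by fun_prop))
  -- The only discontinuity of `d` is met at the single value `s = 1 - t`.
  have hne : ∀ t : ℝ, ∀ᵐ s : ℝ, t - 1 + s ≠ 0 := by
    intro t
    filter_upwards [Measure.ae_ne volume (1 - t)] with s hs h
    exact hs (by linarith)
  have hder : ∀ t, HasDerivAt (fun t => ∫ s in (0:ℝ)..1, (1 - s) ^ q * y (t - 1 + s))
      (∫ s in (0:ℝ)..1, (1 - s) ^ q * d (t - 1 + s)) t := by
    intro t
    refine (intervalIntegral.hasDerivAt_integral_of_dominated_loc_of_lip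
      (bound := fun s => (1 - s) ^ q * M) (s := univ) Filter.univ_mem ?_ ?_ ?_ ?_ ?_ ?_).2
    · exact Filter.Eventually.of_forall fun t => (hym' t).aestronglyMeasurable
    · exact hki.mul_continuousOn (by fun_prop)
    · exact (hdm' t).aestronglyMeasurable
    · refine Filter.Eventually.of_forall fun s _ => LipschitzOnWith.of_dist_le_mul fun a _ b _ => ?_
      rw [Real.dist_eq, Real.dist_eq, ← mul_sub, abs_mul, Real.coe_nnabs, abs_mul, mul_assoc,
        abs_of_nonneg hM0]
      gcongr
      have := hyl (a - 1 + s) (b - 1 + s)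
      rwa [show a - 1 + s - (b - 1 + s) = a - b by ring] at this
    · exact hki.mul_const M
    · filter_upwards [hne t] with s hs _
      have := (hyd _ hs).comp t (((hasDerivAt_id t).sub_const 1).add_const s)
      simpa [Function.comp_def] using this.const_mul ((1 - s) ^ q)
  refine ⟨fun t => ∫ s in (0:ℝ)..1, (1 - s) ^ q * d (t - 1 + s), ?_, ?_, ?_, ?_⟩
  · refine continuous_iff_continuousAt.2 fun t => ?_
    refine intervalIntegral.continuousAt_of_dominated_interval
      (bound := fun s => |(1 - s) ^ q| * M) ?_ ?_ ?_ ?_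
    · exact Filter.Eventually.of_forall fun t => (hdm' t).aestronglyMeasurable
    · refine Filter.Eventually.of_forall fun v => Filter.Eventually.of_forall fun s _ => ?_
      rw [norm_mul, Real.norm_eq_abs, Real.norm_eq_abs]
      exact mul_le_mul_of_nonneg_left (hdM _) (abs_nonneg _)
    · exact hki.abs.mul_const M
    · filter_upwards [hne t] with s hs _
      refine continuousAt_const.mul ?_
      exact ContinuousAt.comp (f := fun t => t - 1 + s) (hdc _ hs) (by fun_prop)
  · intro t ht
    refine (hder t).hasDerivWithinAt.congr (fun v hv => ?_) ?_
    · exact (integral_ite_rpow_eq hq hv hyc hy0 hyx).2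
    · exact (integral_ite_rpow_eq hq ht hyc hy0 hyx).2
  · intro t ht
    rw [(integral_ite_rpow_eq hq ht hyc hy0 hyx).2]
    refine abs_integral_le_of_rpow hq fun s hs => ?_
    have h1 : 0 ≤ (1 - s) ^ q := Real.rpow_nonneg (by linarith [hs.2]) _
    rw [abs_mul, abs_of_nonneg h1, mul_comm]
    refine mul_le_mul_of_nonneg_right ?_ h1
    rcases le_total (t - 1 + s) 0 with h | h
    · rw [hy0 _ h, abs_zero]
      exact (abs_nonneg _).trans (hM₀ 0 (by simp))
    · have hm : t - 1 + s ∈ Icc (0:ℝ) 1 := ⟨h, by linarith [ht.2, hs.2]⟩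
      rw [hyx _ hm]
      exact hM₀ _ hm
  · intro t
    refine abs_integral_le_of_rpow hq fun s hs => ?_
    have h1 : 0 ≤ (1 - s) ^ q := Real.rpow_nonneg (by linarith [hs.2]) _
    rw [abs_mul, abs_of_nonneg h1, mul_comm]
    exact mul_le_mul_of_nonneg_right (hdM _) h1

/-! ### The two integral operators -/

/-- Both operators have this shape: a convolution term `A` and two separated terms whose
`s`-integrals are the constants `c₁`, `c₂`. -/
lemma kernel_combination_C1 {α k c₁ c₂ b₀ d₀ e₁ e₂ : ℝ} (hα : 0 < α) {A D : ℝ → ℝ}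
    (hA : ∀ t ∈ Icc (0:ℝ) 1, HasDerivWithinAt A (D t) (Icc 0 1) t)
    (hD : ContinuousOn D (Icc 0 1))
    (hb₀ : ∀ t ∈ Icc (0:ℝ) 1, |A t| ≤ b₀) (hd₀ : ∀ t ∈ Icc (0:ℝ) 1, |D t| ≤ d₀)
    (he₁ : |c₁| ≤ e₁) (he₂ : |c₂| ≤ e₂) :
    ∃ E : ℝ → ℝ,
      (∀ t ∈ Icc (0:ℝ) 1, HasDerivWithinAt
        (fun t => k * (A t + ((α + 1) * t ^ (α + 2) - (α + 2) * t ^ (α + 1)) * c₁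
          + (t ^ (α + 1) - t ^ (α + 2)) * c₂)) (E t) (Icc 0 1) t) ∧
      ContinuousOn E (Icc 0 1) ∧
      (∀ t ∈ Icc (0:ℝ) 1,
        |k * (A t + ((α + 1) * t ^ (α + 2) - (α + 2) * t ^ (α + 1)) * c₁
          + (t ^ (α + 1) - t ^ (α + 2)) * c₂)| ≤ |k| * (b₀ + (2 * α + 3) * e₁ + e₂)) ∧
      ∀ t ∈ Icc (0:ℝ) 1, |E t| ≤ |k| * (d₀ + (α + 1) * (α + 2) * e₁ + (2 * α + 3) * e₂) := by
  have hpow : ∀ p : ℝ, 0 ≤ p → ∀ t ∈ Icc (0:ℝ) 1, 0 ≤ t ^ p ∧ t ^ p ≤ 1 := fun p hp t ht =>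
    ⟨Real.rpow_nonneg ht.1 p, Real.rpow_le_one ht.1 ht.2 hp⟩
  refine ⟨fun t => k * (D t + (α + 1) * (α + 2) * (t ^ (α + 1) - t ^ α) * c₁
    + ((α + 1) * t ^ α - (α + 2) * t ^ (α + 1)) * c₂), ?_, ?_, ?_, ?_⟩
  · intro t ht
    have h1 : HasDerivWithinAt (fun t : ℝ => t ^ (α + 1)) ((α + 1) * t ^ α) (Icc 0 1) t := by
      have := (Real.hasDerivAt_rpow_const (x := t) (p := α + 1) (Or.inr (by linarith)))
      rw [add_sub_cancel_right] at this
      exact this.hasDerivWithinAt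
    have h2 : HasDerivWithinAt (fun t : ℝ => t ^ (α + 2)) ((α + 2) * t ^ (α + 1)) (Icc 0 1) t := by
      have := (Real.hasDerivAt_rpow_const (x := t) (p := α + 2) (Or.inr (by linarith)))
      rw [show α + 2 - 1 = α + 1 by ring] at this
      exact this.hasDerivWithinAt
    have := ((((hA t ht).add (((h2.const_mul (α + 1)).sub (h1.const_mul (α + 2))).mul_const c₁)).add
      ((h1.sub h2).mul_const c₂))).const_mul k
    refine this.congr_deriv ?_
    ring
  · have hc : ∀ p : ℝ, 0 ≤ p → ContinuousOn (fun t : ℝ => t ^ p) (Icc 0 1) := fun p hp =>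
      (continuous_id.rpow_const fun _ => Or.inr hp).continuousOn
    have h0 := hc α hα.le
    have h1 := hc (α + 1) (by linarith)
    fun_prop
  · intro t ht
    obtain ⟨p1, q1⟩ := hpow (α + 1) (by linarith) t ht
    obtain ⟨p2, q2⟩ := hpow (α + 2) (by linarith) t ht
    rw [abs_mul]
    refine mul_le_mul_of_nonneg_left ?_ (abs_nonneg _)
    refine (abs_add_three _ _ _).trans ?_
    rw [abs_mul, abs_mul]
    have hP : |(α + 1) * t ^ (α + 2) - (α + 2) * t ^ (α + 1)| ≤ 2 * α + 3 :=
      abs_le.2 ⟨by nlinarith, by nlinarith⟩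
    have hQ : |t ^ (α + 1) - t ^ (α + 2)| ≤ 1 := abs_le.2 ⟨by linarith, by linarith⟩
    have h1 := mul_le_mul hP he₁ (abs_nonneg _) (by linarith)
    have h2 := mul_le_mul hQ he₂ (abs_nonneg _) zero_le_one
    linarith [hb₀ t ht]
  · intro t ht
    obtain ⟨p1, q1⟩ := hpow (α + 1) (by linarith) t ht
    obtain ⟨p2, q2⟩ := hpow α hα.le t ht
    rw [abs_mul]
    refine mul_le_mul_of_nonneg_left ?_ (abs_nonneg _)
    refine (abs_add_three _ _ _).trans ?_
    rw [abs_mul, abs_mul _ c₂, abs_mul _ (t ^ (α + 1) - t ^ α),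
      abs_of_nonneg (by positivity : 0 ≤ (α + 1) * (α + 2))]
    have hQ : |t ^ (α + 1) - t ^ α| ≤ 1 := abs_le.2 ⟨by linarith, by linarith⟩
    have hP : |(α + 1) * t ^ α - (α + 2) * t ^ (α + 1)| ≤ 2 * α + 3 :=
      abs_le.2 ⟨by nlinarith, by nlinarith⟩
    have h0 : (α + 1) * (α + 2) * |t ^ (α + 1) - t ^ α| ≤ (α + 1) * (α + 2) :=
      mul_le_of_le_one_right (by positivity) hQ
    have h1 := mul_le_mul h0 he₁ (abs_nonneg _) (by positivity)
    have h2 := mul_le_mul hP he₂ (abs_nonneg _) (by linarith)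
    linarith [hd₀ t ht]

lemma greenG_part {α β F : ℝ} (hα : 0 < α) (hβ : 2 < β) {φ : ℝ → ℝ}
    (hφ : ContinuousOn φ (Icc 0 1)) (hF : ∀ t ∈ Icc (0:ℝ) 1, |φ t| ≤ F) :
    ∃ E : ℝ → ℝ,
      (∀ t ∈ Icc (0:ℝ) 1, HasDerivWithinAt
        (fun t => ∫ s in (0:ℝ)..1, GreenG α β t s * φ s) (E t) (Icc 0 1) t) ∧
      ContinuousOn E (Icc 0 1) ∧
      (∀ t ∈ Icc (0:ℝ) 1, |∫ s in (0:ℝ)..1, GreenG α β t s * φ s| ≤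
        |1 / Real.Gamma (α + β)| * (F / (α + β) + (2 * α + 3) * (F / (α + β)) + F)) ∧
      ∀ t ∈ Icc (0:ℝ) 1, |E t| ≤
        |1 / Real.Gamma (α + β)| * (F + (α + 1) * (α + 2) * (F / (α + β)) + (2 * α + 3) * F) := by
  set e : ℝ → ℝ := IccExtend (zero_le_one (α := ℝ)) ((Icc (0:ℝ) 1).domRestrict φ) with he
  have hec : Continuous e := (continuousOn_iff_continuous_domRestrict.1 hφ).Icc_extend'
  have hee : ∀ v ∈ Icc (0:ℝ) 1, e v = φ v := fun v hv => IccExtend_of_mem _ _ hv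
  have heF : ∀ v, |e v| ≤ F := fun v => hF _ (projIcc (0:ℝ) 1 zero_le_one v).2
  have hF0 : 0 ≤ F := (abs_nonneg _).trans (heF 0)
  have hp : 1 < α + β - 1 := by linarith
  have hp2 : 0 < α + β - 2 := by linarith
  have hcont : ∀ q : ℝ, 0 < q → Continuous fun s : ℝ => (1 - s) ^ q * e s := fun q hq =>
    ((continuous_const.sub continuous_id).rpow_const fun _ => Or.inr hq.le).mul hec
  have hker : ∀ q : ℝ, 0 < q → ∀ t : ℝ, Continuous fun s : ℝ => max (t - s) 0 ^ q := fun q hq t =>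
    (continuous_max_sub_rpow hq).comp (continuous_const.prodMk continuous_id)
  have hint : ∀ q : ℝ, 0 < q → |∫ s in (0:ℝ)..1, (1 - s) ^ q * e s| ≤ F / (q + 1) := by
    intro q hq
    refine abs_integral_le_of_rpow (by linarith) fun s hs => ?_
    have h1 : 0 ≤ (1 - s) ^ q := Real.rpow_nonneg (by linarith [hs.2]) _
    rw [abs_mul, abs_of_nonneg h1, mul_comm]
    exact mul_le_mul_of_nonneg_right (heF _) h1
  have hmax : ∀ q : ℝ, 0 < q → ∀ t ∈ Icc (0:ℝ) 1, ∀ c : ℝ, 0 ≤ c →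
      |∫ s in (0:ℝ)..1, c * max (t - s) 0 ^ q * e s| ≤ (c * F) / (q + 1) := by
    intro q hq t ht c hc
    refine abs_integral_le_of_rpow (by linarith) fun s hs => ?_
    have h1 : max (t - s) 0 ^ q ≤ (1 - s) ^ q :=
      Real.rpow_le_rpow (le_max_right _ _)
        (max_le (by linarith [ht.2]) (by linarith [hs.2])) hq.le
    have h2 : 0 ≤ max (t - s) 0 ^ q := Real.rpow_nonneg (le_max_right _ _) _
    rw [abs_mul, abs_mul, abs_of_nonneg hc, abs_of_nonneg h2]
    calc c * max (t - s) 0 ^ q * |e s| ≤ c * (1 - s) ^ q * F := by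
          have h3 : 0 ≤ c * (1 - s) ^ q := mul_nonneg hc (h2.trans h1)
          exact mul_le_mul (mul_le_mul_of_nonneg_left h1 hc) (heF s) (abs_nonneg _) h3
      _ = _ := by ring
  obtain ⟨E, h1, h2, h3, h4⟩ := kernel_combination_C1 (k := 1 / Real.Gamma (α + β)) hα
    (A := fun t => ∫ s in (0:ℝ)..1, max (t - s) 0 ^ (α + β - 1) * e s)
    (c₁ := ∫ s in (0:ℝ)..1, (1 - s) ^ (α + β - 1) * e s)
    (c₂ := (α + β - 1) * ∫ s in (0:ℝ)..1, (1 - s) ^ (α + β - 2) * e s)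
    (b₀ := F / (α + β)) (d₀ := F) (e₁ := F / (α + β)) (e₂ := F)
    (fun t _ => (hasDerivAt_integral_max_rpow hp hec t).hasDerivWithinAt)
    (continuous_integral_max_rpow (by linarith) _ hec).continuousOn
    (fun t ht => by
      have := hmax (α + β - 1) (by linarith) t ht 1 zero_le_one
      simpa using this)
    (fun t ht => by
      have := hmax (α + β - 1 - 1) (by linarith) t ht (α + β - 1) (by linarith)
      rwa [sub_add_cancel, mul_div_cancel_left₀ _ (by linarith)] at this)
    (by simpa using hint (α + β - 1) (by linarith))
    (by
      have := hint (α + β - 2) hp2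
      rw [show α + β - 2 + 1 = α + β - 1 by ring, le_div_iff₀ (by linarith)] at this
      rw [abs_mul, abs_of_pos (by linarith)]
      linarith)
  have key : ∀ t : ℝ, ∫ s in (0:ℝ)..1, GreenG α β t s * φ s =
      1 / Real.Gamma (α + β) * ((∫ s in (0:ℝ)..1, max (t - s) 0 ^ (α + β - 1) * e s)
        + ((α + 1) * t ^ (α + 2) - (α + 2) * t ^ (α + 1))
          * (∫ s in (0:ℝ)..1, (1 - s) ^ (α + β - 1) * e s)
        + (t ^ (α + 1) - t ^ (α + 2))
          * ((α + β - 1) * ∫ s in (0:ℝ)..1, (1 - s) ^ (α + β - 2) * e s)) := by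
    intro t
    have i1 : IntervalIntegrable (fun s => max (t - s) 0 ^ (α + β - 1) * e s) volume 0 1 :=
      ((hker (α + β - 1) (by linarith) t).mul hec).intervalIntegrable 0 1
    have i2 := (hcont (α + β - 1) (by linarith)).intervalIntegrable (μ := volume) 0 1
    have i3 := (hcont (α + β - 2) hp2).intervalIntegrable (μ := volume) 0 1
    rw [← mul_assoc (t ^ (α + 1) - t ^ (α + 2)), ← integral_three_terms i1 i2 i3]
    refine intervalIntegral.integral_congr fun s hs => ?_
    rw [uIcc_of_le zero_le_one] at hs
    have hif : (if s ≤ t then (t - s) ^ (α + β - 1) else 0) = max (t - s) 0 ^ (α + β - 1) := by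
      split_ifs with h
      · rw [max_eq_left (by linarith)]
      · rw [max_eq_right (by linarith), Real.zero_rpow (by linarith)]
    simp only [GreenG, hif, hee s hs]
    ring
  simp only [key]
  exact ⟨E, h1, h2, h3, h4⟩

lemma greenH_part {α γ M₀ M : ℝ} (hα : 0 < α) (hα1 : α ≤ 1) {x x' : ℝ → ℝ}
    (hx : ∀ t ∈ Icc (0:ℝ) 1, HasDerivWithinAt x (x' t) (Icc (0:ℝ) 1) t)
    (hx' : ContinuousOn x' (Icc 0 1)) (hx0 : x 0 = 0) (hx1 : x 1 = 0)
    (hM₀ : ∀ t ∈ Icc (0:ℝ) 1, |x t| ≤ M₀) (hM : ∀ t ∈ Icc (0:ℝ) 1, |x' t| ≤ M) :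
    ∃ E : ℝ → ℝ,
      (∀ t ∈ Icc (0:ℝ) 1, HasDerivWithinAt
        (fun t => ∫ s in (0:ℝ)..1, GreenH α γ t s * x s) (E t) (Icc 0 1) t) ∧
      ContinuousOn E (Icc 0 1) ∧
      (∀ t ∈ Icc (0:ℝ) 1, |∫ s in (0:ℝ)..1, GreenH α γ t s * x s| ≤
        |γ / Real.Gamma α| * (M₀ / α + (2 * α + 3) * (M₀ / α) + (1 - α) * (M / α))) ∧
      ∀ t ∈ Icc (0:ℝ) 1, |E t| ≤
        |γ / Real.Gamma α| * (M / α + (α + 1) * (α + 2) * (M₀ / α)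
          + (2 * α + 3) * ((1 - α) * (M / α))) := by
  have hq : -1 < α - 1 := by linarith
  have hxc : ContinuousOn x (Icc 0 1) := fun t ht => (hx t ht).continuousWithinAt
  obtain ⟨y, d, hdm, hdM, hdc, hyd, hyl, hy0, hyx⟩ := exists_zero_extension hx hx' hx0 hM
  have hM0 : 0 ≤ M := (abs_nonneg _).trans (hdM 0)
  have hyc : Continuous y := by
    refine (LipschitzWith.of_dist_le_mul (K := ⟨M, hM0⟩) fun a b => ?_).continuous
    rw [Real.dist_eq, Real.dist_eq]
    exact hyl a b
  obtain ⟨D, D1, D2, D3, D4⟩ :=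
    fractional_integral_C1 hq hdm hdM hdc hyd hyl hyc hy0 hyx hM₀
  rw [sub_add_cancel] at D3 D4
  -- Since `x 1 = 0`, `x` vanishes linearly at `1`, which makes `(1 - s) ^ (α - 2) * x s` integrable.
  have hx1' : ∀ s ∈ Icc (0:ℝ) 1, |x s| ≤ M * (1 - s) := by
    intro s hs
    have := hyl s 1
    rwa [hyx s hs, hyx 1 (by simp), hx1, sub_zero, abs_sub_comm,
      abs_of_nonneg (by linarith [hs.2] : 0 ≤ 1 - s)] at this
  have hb2 : ∀ s ∈ Ioo (0:ℝ) 1, |(1 - s) ^ (α - 2) * x s| ≤ M * (1 - s) ^ (α - 1) := by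
    intro s hs
    have hs1 : 0 < 1 - s := by linarith [hs.2]
    have h1 : 0 ≤ (1 - s) ^ (α - 2) := Real.rpow_nonneg hs1.le _
    rw [abs_mul, abs_of_nonneg h1]
    calc (1 - s) ^ (α - 2) * |x s| ≤ (1 - s) ^ (α - 2) * (M * (1 - s)) :=
          mul_le_mul_of_nonneg_left (hx1' s (Ioo_subset_Icc_self hs)) h1
      _ = M * ((1 - s) ^ (α - 2) * (1 - s) ^ (1:ℝ)) := by rw [Real.rpow_one]; ring
      _ = M * (1 - s) ^ (α - 1) := by
          rw [← Real.rpow_add hs1]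
          congr 2
          ring
  have i2 : IntervalIntegrable (fun s => (1 - s) ^ (α - 1) * x s) volume 0 1 :=
    (intervalIntegrable_sub_rpow hq 0 1 1).mul_continuousOn (by rwa [uIcc_of_le zero_le_one])
  have i3 : IntervalIntegrable (fun s => (1 - s) ^ (α - 2) * x s) volume 0 1 := by
    refine ((intervalIntegrable_sub_rpow hq 0 1 1).const_mul M).mono_fun ?_ ?_
    · refine AEStronglyMeasurable.mul (Measurable.aestronglyMeasurable (by fun_prop)) ?_
      rw [uIoc_of_le zero_le_one]
      exact (hxc.mono Ioc_subset_Icc_self).aestronglyMeasurable measurableSet_Ioc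
    · rw [uIoc_of_le zero_le_one]
      refine (ae_restrict_iff' measurableSet_Ioc).2 ?_
      filter_upwards [Measure.ae_ne volume 1] with s hs hs'
      exact (hb2 s ⟨hs'.1, lt_of_le_of_ne hs'.2 hs⟩).trans (le_abs_self _)
  have hc1 : |∫ s in (0:ℝ)..1, (1 - s) ^ (α - 1) * x s| ≤ M₀ / α := by
    have := abs_integral_le_of_rpow (g := fun s => (1 - s) ^ (α - 1) * x s) (M := M₀) hq
      fun s hs => by
        have h1 : 0 ≤ (1 - s) ^ (α - 1) := Real.rpow_nonneg (by linarith [hs.2]) _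
        rw [abs_mul, abs_of_nonneg h1, mul_comm]
        exact mul_le_mul_of_nonneg_right (hM₀ s (Ioo_subset_Icc_self hs)) h1
    rwa [sub_add_cancel] at this
  have hc2 : |∫ s in (0:ℝ)..1, (1 - s) ^ (α - 2) * x s| ≤ M / α := by
    have := abs_integral_le_of_rpow hq hb2
    rwa [sub_add_cancel] at this
  obtain ⟨E, h1, h2, h3, h4⟩ := kernel_combination_C1 (k := γ / Real.Gamma α) hα
    (A := fun t => -∫ s in (0:ℝ)..1, (if s ≤ t then (t - s) ^ (α - 1) else 0) * x s)
    (D := fun t => - D t)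
    (c₁ := -∫ s in (0:ℝ)..1, (1 - s) ^ (α - 1) * x s)
    (c₂ := (1 - α) * ∫ s in (0:ℝ)..1, (1 - s) ^ (α - 2) * x s)
    (b₀ := M₀ / α) (d₀ := M / α) (e₁ := M₀ / α) (e₂ := (1 - α) * (M / α))
    (fun t ht => (D2 t ht).neg) D1.neg.continuousOn
    (fun t ht => by rw [abs_neg]; exact D3 t ht)
    (fun t ht => by rw [abs_neg]; exact D4 t)
    (by rwa [abs_neg])
    (by
      rw [abs_mul, abs_of_nonneg (by linarith)]
      exact mul_le_mul_of_nonneg_left hc2 (by linarith))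
  have key : ∀ t ∈ Icc (0:ℝ) 1, ∫ s in (0:ℝ)..1, GreenH α γ t s * x s =
      γ / Real.Gamma α * ((-∫ s in (0:ℝ)..1, (if s ≤ t then (t - s) ^ (α - 1) else 0) * x s)
        + ((α + 1) * t ^ (α + 2) - (α + 2) * t ^ (α + 1))
          * (-∫ s in (0:ℝ)..1, (1 - s) ^ (α - 1) * x s)
        + (t ^ (α + 1) - t ^ (α + 2))
          * ((1 - α) * ∫ s in (0:ℝ)..1, (1 - s) ^ (α - 2) * x s)) := by
    intro t ht
    have i1 := (integral_ite_rpow_eq hq ht hyc hy0 hyx).1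
    have h := integral_three_terms i1 i2 i3 (-(γ / Real.Gamma α))
      ((α + 1) * t ^ (α + 2) - (α + 2) * t ^ (α + 1)) (-((t ^ (α + 1) - t ^ (α + 2)) * (1 - α)))
    refine (intervalIntegral.integral_congr fun s hs => ?_).trans (h.trans (by ring))
    simp only [GreenH]
    ring
  refine ⟨E, fun t ht => (h1 t ht).congr (fun v hv => key v hv) (key t ht), h2, ?_, h4⟩
  intro t ht
  rw [key t ht]
  exact h3 t ht

/-! ### Comparison of constants -/

/-- The sublinear exponent is what lets the bound on `r` absorb `a * r ^ τ`. -/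
lemma four_mul_rpow_le {a K τ r : ℝ} (ha : 0 ≤ a) (hK : 0 ≤ K) (hτ : τ ∈ Ioo (0:ℝ) 1) (hr : 0 < r)
    (h : (4 * a * K) ^ (1 / (1 - τ)) ≤ r) : 4 * (a * r ^ τ) * K ≤ r := by
  rw [one_div, Real.rpow_inv_le_iff_of_pos (by positivity) hr.le (by linarith [hτ.2])] at h
  calc 4 * (a * r ^ τ) * K = 4 * a * K * r ^ τ := by ring
    _ ≤ r ^ (1 - τ) * r ^ τ := mul_le_mul_of_nonneg_right h (Real.rpow_nonneg hr.le _)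
    _ = r := by rw [← Real.rpow_add hr]; simp

lemma greenG_constants_le {α β F K : ℝ} (hα : 0 < α) (hβ : 2 < β) (hF : 0 ≤ F)
    (hK : K = (4 * (α + 1) + 2 * β) / Real.Gamma (α + β + 1)
      + ((2 * α + 4) / Real.Gamma (α + β)
          + 2 * (α + 1) * (α + 2) / Real.Gamma (α + β + 1))) :
    |1 / Real.Gamma (α + β)| * (F / (α + β) + (2 * α + 3) * (F / (α + β)) + F)
      + |1 / Real.Gamma (α + β)| * (F + (α + 1) * (α + 2) * (F / (α + β)) + (2 * α + 3) * F)
      ≤ K * F := by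
  have hs : 0 < α + β := by linarith
  have hg : 0 < Real.Gamma (α + β) := Real.Gamma_pos_of_pos hs
  rw [Real.Gamma_add_one hs.ne'] at hK
  rw [abs_of_pos (by positivity)]
  have hw : 0 ≤ F / ((α + β) * Real.Gamma (α + β)) := by positivity
  have e1 : K * F - (1 / Real.Gamma (α + β) * (F / (α + β) + (2 * α + 3) * (F / (α + β)) + F)
      + 1 / Real.Gamma (α + β) * (F + (α + 1) * (α + 2) * (F / (α + β)) + (2 * α + 3) * F))
      = (α + β + (α + 1) * (α + 2)) * (F / ((α + β) * Real.Gamma (α + β))) := by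
    rw [hK]
    field_simp
    ring
  have : 0 ≤ (α + β + (α + 1) * (α + 2)) * (F / ((α + β) * Real.Gamma (α + β))) := by positivity
  linarith

lemma greenH_constants_le {α γ M₀ M r L : ℝ} (hα : 0 < α) (hM₀ : 0 ≤ M₀) (hM : 0 ≤ M)
    (hr : M₀ + M ≤ r)
    (hL : L = 4 * |γ| * (α + 1) / Real.Gamma (α + 1)
      + (|γ| * (2 * α + 4) / Real.Gamma α
          + 2 * |γ| * (α + 1) * (α + 2) / Real.Gamma (α + 1))) :
    |γ / Real.Gamma α| * (M₀ / α + (2 * α + 3) * (M₀ / α) + (1 - α) * (M / α))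
      + |γ / Real.Gamma α| * (M / α + (α + 1) * (α + 2) * (M₀ / α)
          + (2 * α + 3) * ((1 - α) * (M / α))) ≤ L * r := by
  have hg : 0 < Real.Gamma α := Real.Gamma_pos_of_pos hα
  rw [Real.Gamma_add_one hα.ne'] at hL
  rw [abs_div, abs_of_pos hg]
  have hw : 0 ≤ |γ| / (α * Real.Gamma α) := by positivity
  have e1 : L * r - (|γ| / Real.Gamma α * (M₀ / α + (2 * α + 3) * (M₀ / α) + (1 - α) * (M / α))
      + |γ| / Real.Gamma α * (M / α + (α + 1) * (α + 2) * (M₀ / α)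
          + (2 * α + 3) * ((1 - α) * (M / α))))
      = |γ| / (α * Real.Gamma α) * ((4 * α ^ 2 + 14 * α + 8) * r - (α ^ 2 + 5 * α + 6) * M₀
        - (5 - 2 * α - 2 * α ^ 2) * M) := by
    rw [hL]
    field_simp
    ring
  have h2 : 0 ≤ (4 * α ^ 2 + 14 * α + 8) * r - (α ^ 2 + 5 * α + 6) * M₀
        - (5 - 2 * α - 2 * α ^ 2) * M := by
    have h3 : (4 * α ^ 2 + 14 * α + 8) * (M₀ + M) ≤ (4 * α ^ 2 + 14 * α + 8) * r := by gcongr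
    have h4 : 0 ≤ (3 * α ^ 2 + 9 * α + 2) * M₀ := by positivity
    have h5 : 0 ≤ (6 * α ^ 2 + 16 * α + 3) * M := by positivity
    linarith
  have := mul_nonneg hw h2
  linarith

theorem operator_maps_ball_to_ball (α β γ : ℝ) (hα0 : 0 < α) (hα1 : α ≤ 1)
    (hβ2 : 2 < β) (hβ3 : β ≤ 3) (f : ℝ → ℝ → ℝ → ℝ)
    (hf : ContinuousOn (fun p : ℝ × ℝ × ℝ => f p.1 p.2.1 p.2.2)
      (Set.Icc 0 1 ×ˢ (Set.univ : Set (ℝ × ℝ))))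
    (σ : ℝ → ℝ) (hσc : ContinuousOn σ (Set.Icc 0 1))
    (hσ0 : ∀ t ∈ Set.Icc (0:ℝ) 1, 0 ≤ σ t)
    (a₁ a₂ : ℝ) (ha₁ : 0 ≤ a₁) (ha₂ : 0 ≤ a₂)
    (τ₁ τ₂ : ℝ) (hτ₁ : τ₁ ∈ Set.Ioo (0:ℝ) 1) (hτ₂ : τ₂ ∈ Set.Ioo (0:ℝ) 1)
    (hgrowth : ∀ t ∈ Set.Icc (0:ℝ) 1, ∀ u v : ℝ,
      |f t u v| ≤ σ t + a₁ * |u| ^ τ₁ + a₂ * |v| ^ τ₂)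
    (σnorm K L : ℝ)
    (hσnorm : σnorm = ⨆ t : Set.Icc (0:ℝ) 1, σ t)
    (hK : K = (4 * (α + 1) + 2 * β) / Real.Gamma (α + β + 1)
      + ((2 * α + 4) / Real.Gamma (α + β)
          + 2 * (α + 1) * (α + 2) / Real.Gamma (α + β + 1)))
    (hL : L = 4 * |γ| * (α + 1) / Real.Gamma (α + 1)
      + (|γ| * (2 * α + 4) / Real.Gamma α
          + 2 * |γ| * (α + 1) * (α + 2) / Real.Gamma (α + 1)))
    (r : ℝ) (hr : 0 < r)
    (hr1 : 4 * K * σnorm ≤ r)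
    (hr2 : (4 * a₁ * K) ^ (1 / (1 - τ₁)) ≤ r)
    (hr3 : (4 * a₂ * K) ^ (1 / (1 - τ₂)) ≤ r)
    (hL4 : 4 * L ≤ 1) :
    ∀ x x' : ℝ → ℝ,
      (∀ t ∈ Set.Icc (0:ℝ) 1, HasDerivWithinAt x (x' t) (Set.Icc (0:ℝ) 1) t) →
      ContinuousOn x' (Set.Icc 0 1) → x 0 = 0 → x 1 = 0 →
      (⨆ t : Set.Icc (0:ℝ) 1, |x t|) + (⨆ t : Set.Icc (0:ℝ) 1, |x' t|) ≤ r →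
      ∃ Z' : ℝ → ℝ,
        (∀ t ∈ Set.Icc (0:ℝ) 1,
          HasDerivWithinAt
            (fun t => (∫ s in (0:ℝ)..1, GreenG α β t s * f s (x s) (x' s))
              + ∫ s in (0:ℝ)..1, GreenH α γ t s * x s)
            (Z' t) (Set.Icc (0:ℝ) 1) t) ∧
        ContinuousOn Z' (Set.Icc 0 1) ∧
        (⨆ t : Set.Icc (0:ℝ) 1,
            |(∫ s in (0:ℝ)..1, GreenG α β (↑t) s * f s (x s) (x' s))
              + ∫ s in (0:ℝ)..1, GreenH α γ (↑t) s * x s|)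
          + (⨆ t : Set.Icc (0:ℝ) 1, |Z' t|) ≤ r := by
  intro x x' hx hx' hx0 hx1 hxr
  have hxc : ContinuousOn x (Icc 0 1) := fun t ht => (hx t ht).continuousWithinAt
  have hle : ∀ g : ℝ → ℝ, ContinuousOn g (Icc 0 1) →
      ∀ t ∈ Icc (0:ℝ) 1, g t ≤ ⨆ t : Icc (0:ℝ) 1, g t := by
    intro g hg t ht
    have hb : BddAbove (range fun t : Icc (0:ℝ) 1 => g t) := by
      have := (isCompact_Icc.image_of_continuousOn hg).bddAbove
      rwa [image_eq_range] at this
    exact le_ciSup hb ⟨t, ht⟩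
  have hM₀ := hle (fun t => |x t|) hxc.abs
  have hM := hle (fun t => |x' t|) hx'.abs
  have hσ := hle σ hσc
  rw [← hσnorm] at hσ
  set M₀ := ⨆ t : Icc (0:ℝ) 1, |x t|
  set M := ⨆ t : Icc (0:ℝ) 1, |x' t|
  have h0 : (0:ℝ) ∈ Icc (0:ℝ) 1 := by simp
  have hM₀0 : 0 ≤ M₀ := (abs_nonneg _).trans (hM₀ 0 h0)
  have hM0 : 0 ≤ M := (abs_nonneg _).trans (hM 0 h0)
  have hσn : 0 ≤ σnorm := (hσ0 0 h0).trans (hσ 0 h0)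
  have hK0 : 0 ≤ K := by
    have h1 := Real.Gamma_pos_of_pos (by linarith : 0 < α + β)
    have h2 := Real.Gamma_pos_of_pos (by linarith : 0 < α + β + 1)
    rw [hK]
    positivity
  have hφ : ContinuousOn (fun s => f s (x s) (x' s)) (Icc 0 1) :=
    hf.comp (continuousOn_id.prodMk (hxc.prodMk hx')) fun s hs => ⟨hs, mem_univ _⟩
  set F := σnorm + a₁ * r ^ τ₁ + a₂ * r ^ τ₂ with hFdef
  have hF0 : 0 ≤ F := by positivity
  have hF : ∀ s ∈ Icc (0:ℝ) 1, |f s (x s) (x' s)| ≤ F := by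
    intro s hs
    refine (hgrowth s hs _ _).trans ?_
    have e1 : |x s| ^ τ₁ ≤ r ^ τ₁ :=
      Real.rpow_le_rpow (abs_nonneg _) (by linarith [hM₀ s hs]) hτ₁.1.le
    have e2 : |x' s| ^ τ₂ ≤ r ^ τ₂ :=
      Real.rpow_le_rpow (abs_nonneg _) (by linarith [hM s hs]) hτ₂.1.le
    have e3 := hσ s hs
    rw [hFdef]
    gcongr
  obtain ⟨E₁, g1, g2, g3, g4⟩ := greenG_part hα0 hβ2 hφ hF
  obtain ⟨E₂, k1, k2, k3, k4⟩ := greenH_part (γ := γ) hα0 hα1 hx hx' hx0 hx1 hM₀ hM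
  refine ⟨fun t => E₁ t + E₂ t, fun t ht => (g1 t ht).add (k1 t ht), g2.add k2, ?_⟩
  have : Nonempty (Icc (0:ℝ) 1) := ⟨⟨0, h0⟩⟩
  have s1 := ciSup_le (f := fun t : Icc (0:ℝ) 1 =>
      |(∫ s in (0:ℝ)..1, GreenG α β (↑t) s * f s (x s) (x' s))
        + ∫ s in (0:ℝ)..1, GreenH α γ (↑t) s * x s|)
    fun t => (abs_add_le _ _).trans (add_le_add (g3 t t.2) (k3 t t.2))
  have s2 := ciSup_le (f := fun t : Icc (0:ℝ) 1 => |E₁ t + E₂ t|)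
    fun t => (abs_add_le _ _).trans (add_le_add (g4 t t.2) (k4 t t.2))
  have hG := greenG_constants_le hα0 hβ2 hF0 hK
  have hH := greenH_constants_le (γ := γ) hα0 hM₀0 hM0 hxr hL
  -- Each of the three terms of `K * F`, and also `L * r`, is at most `r / 4`.
  have t1 := four_mul_rpow_le ha₁ hK0 hτ₁ hr hr2
  have t2 := four_mul_rpow_le ha₂ hK0 hτ₂ hr hr3
  have t3 : 4 * (L * r) ≤ r := by nlinarith
  have t4 : 4 * (K * F) ≤ 3 * r := by
    rw [hFdef]
    linarith
  linarith
end

section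
/- Assume f is continuous and satisfies the Lipschitz condition (A₂) with constant w > 0. Let x, y : [0,1] → ℝ be continuously differentiable with x(0) = y(0) = 0 and x(1) = y(1) = 0. Then ‖Zx − Zy‖ = sup_{t∈[0,1]}|(Zx)(t) − (Zy)(t)| + sup_{t∈[0,1]}|(Zx)'(t) − (Zy)'(t)| ≤ ψ·‖x − y‖, where (Zx)(t) = ∫₀¹ G(t,s)·f(s, x(s), x'(s)) ds + ∫₀¹ H(t,s)·x(s) ds and similarly for Zy. -/
/-!
Both Green kernels are combinations of truncated powers `(t - s)₊ ^ p` and of powers of `1 - s` with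
coefficients depending on `t`. Hence `Z` is a combination of Riemann–Liouville integrals
`∫₀ᵗ (t - s) ^ p φ(s) ds` evaluated at `t` and at `1` (`greenVal_eq`). The one non-integrable factor,
`(1 - s) ^ (α - 2)`, is harmless because `x` is `C¹` with `x 1 = 0`: the quotient `x s / (1 - s)` is
bounded by `sup |x'|`, which leaves the integrable factor `(1 - s) ^ (α - 1)`.

Differentiability of `Z x` in `t` rests on `rlInt_hasDerivWithinAt`. Since `x 0 = 0`, the derivative
of the Riemann–Liouville integral of `x` is that of `x'`; the substitution `r = t - s` turns the
integrand into `r ^ p * x (t - r)` with `x` extended by constants, which is Lipschitz in `t` with an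
integrable constant, so dominated convergence applies although the kernel is singular. For the `f`
term, whose density is merely continuous, an integration by parts reduces to this case.

The resulting formulas for `Z x` and its derivative are linear in the densities, so the differences
`Z x - Z y` and `(Z x)' - (Z y)'` have the same form with the differences of the densities. These are
bounded by `w ‖x - y‖`, `sup |x - y|` and `sup |x' - y'|`, and the integral of `(t - s)₊ ^ p` is at
most `1 / (p + 1)`. The functional equation of `Γ` then gives the claim (`greenVal_abs_le`,
`greenDer_abs_le`).
-/

open Set intervalIntegral

open MeasureTheory Filter Topology

/-! ### Riemann–Liouville integrals -/

/-- The truncated power `(t - s)₊ ^ p`. At `s = t` it takes the value `0 ^ p` of `Real.rpow`, which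
is irrelevant under an integral in `s`. -/
noncomputable def rlKernel (p t s : ℝ) : ℝ := if s ≤ t then (t - s) ^ p else 0

/-- The Riemann–Liouville integral `∫₀ᵗ (t - s) ^ p φ(s) ds` of order `p + 1`, without its Gamma
factor, written over the fixed interval `[0, 1]` by means of the truncated kernel. -/
noncomputable def rlInt (p t : ℝ) (φ : ℝ → ℝ) : ℝ :=
  ∫ s in (0:ℝ)..1, rlKernel p t s * φ s

lemma rlKernel_nonneg (p t s : ℝ) : 0 ≤ rlKernel p t s := by
  unfold rlKernel
  split_ifs with h
  · exact Real.rpow_nonneg (by linarith) _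
  · exact le_rfl

lemma rlKernel_intervalIntegrable {p t : ℝ} (hp : -1 < p) (ht : t ∈ Icc (0:ℝ) 1) :
    IntervalIntegrable (rlKernel p t) volume 0 1 := by
  have h1 : IntervalIntegrable (rlKernel p t) volume 0 t := by
    have h := (intervalIntegrable_rpow' (a := t) (b := 0) hp).comp_sub_left t
    simp only [sub_self, sub_zero] at h
    refine h.congr ?_
    intro s hs
    rw [uIoc_of_le ht.1] at hs
    simp [rlKernel, hs.2]
  have h2 : IntervalIntegrable (rlKernel p t) volume t 1 := by
    refine (intervalIntegrable_const (c := (0:ℝ))).congr ?_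
    intro s hs
    rw [uIoc_of_le ht.2] at hs
    simp [rlKernel, hs.1]
  exact h1.trans h2

lemma rlInt_eq {p t : ℝ} (ht : t ∈ Icc (0:ℝ) 1) (φ : ℝ → ℝ) :
    rlInt p t φ = ∫ s in (0:ℝ)..t, (t - s) ^ p * φ s := by
  rw [← intervalIntegral.integral_indicator ht, rlInt]
  congr 1
  ext s
  by_cases h : s ≤ t <;> simp [rlKernel, indicator, h]

lemma integral_rlKernel_le {p t : ℝ} (hp : -1 < p) (ht : t ∈ Icc (0:ℝ) 1) :
    ∫ s in (0:ℝ)..1, rlKernel p t s ≤ 1 / (p + 1) := by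
  have h := rlInt_eq (p := p) ht (fun _ => 1)
  simp only [rlInt, mul_one] at h
  rw [h, intervalIntegral.integral_comp_sub_left (fun s => s ^ p) t, integral_rpow (Or.inl hp)]
  have hp1 : 0 < p + 1 := by linarith
  simp only [sub_self, sub_zero, Real.zero_rpow hp1.ne']
  gcongr
  exact Real.rpow_le_one ht.1 ht.2 hp1.le

/-- Continuous and bounded on the open interval `(0, 1)`: the class of densities used below. The
endpoints are excluded so that `u s / (1 - s)` belongs to it when `u` is `C¹` and `u 1 = 0`. -/
def BddCont (φ : ℝ → ℝ) : Prop :=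
  ContinuousOn φ (Ioo 0 1) ∧ ∃ M, ∀ s ∈ Ioo (0:ℝ) 1, |φ s| ≤ M

lemma BddCont.of_continuousOn {φ : ℝ → ℝ} (h : ContinuousOn φ (Icc 0 1)) : BddCont φ := by
  obtain ⟨M, hM⟩ := isCompact_Icc.exists_bound_of_continuousOn h
  exact ⟨h.mono Ioo_subset_Icc_self, M, fun s hs => hM s (Ioo_subset_Icc_self hs)⟩

lemma rlInt_integrable {p t : ℝ} {φ : ℝ → ℝ} (hp : -1 < p) (ht : t ∈ Icc (0:ℝ) 1)
    (hφ : BddCont φ) :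
    IntervalIntegrable (fun s => rlKernel p t s * φ s) volume 0 1 := by
  obtain ⟨hc, M, hM⟩ := hφ
  have hk := rlKernel_intervalIntegrable hp ht
  rw [intervalIntegrable_iff_integrableOn_Ioo_of_le zero_le_one] at hk ⊢
  refine Integrable.mul_bdd (c := M) hk (hc.aestronglyMeasurable measurableSet_Ioo) ?_
  exact (ae_restrict_iff' measurableSet_Ioo).2 (Eventually.of_forall hM)

lemma rlInt_abs_le {p t M : ℝ} {φ : ℝ → ℝ} (hp : -1 < p) (ht : t ∈ Icc (0:ℝ) 1)
    (hM : ∀ s ∈ Ioo (0:ℝ) 1, |φ s| ≤ M) : |rlInt p t φ| ≤ M / (p + 1) := by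
  have hM0 : 0 ≤ M := (abs_nonneg _).trans (hM (1 / 2) (by norm_num))
  have h := intervalIntegral.norm_integral_le_of_norm_le (μ := volume) (a := 0) (b := 1)
    (f := fun s => rlKernel p t s * φ s) (g := fun s => M * rlKernel p t s) zero_le_one ?_
    ((rlKernel_intervalIntegrable hp ht).const_mul M)
  · rw [intervalIntegral.integral_const_mul] at h
    calc |rlInt p t φ| ≤ M * ∫ s in (0:ℝ)..1, rlKernel p t s := h
      _ ≤ M * (1 / (p + 1)) := by gcongr; exact integral_rlKernel_le hp ht
      _ = M / (p + 1) := by ring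
  · filter_upwards [Measure.ae_ne volume (1:ℝ)] with s hs1 hs
    rw [norm_mul, Real.norm_of_nonneg (rlKernel_nonneg p t s), mul_comm]
    exact mul_le_mul_of_nonneg_right (hM s ⟨hs.1, lt_of_le_of_ne hs.2 hs1⟩)
      (rlKernel_nonneg p t s)

lemma rlInt_congr {p t : ℝ} {φ ψ : ℝ → ℝ} (h : EqOn φ ψ (Ioo 0 1)) :
    rlInt p t φ = rlInt p t ψ :=
  intervalIntegral.integral_congr_Ioo_of_le zero_le_one fun s hs => by
    simp only [h hs]

/-- Substituting `r = t - s` moves the singularity of the kernel to the fixed point `r = 0`, so that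
the dependence on `t` sits in the density only. -/
lemma rlInt_eq_reflect {p t : ℝ} (ht : t ∈ Icc (0:ℝ) 1) {φ ψ : ℝ → ℝ}
    (h : EqOn ψ φ (Ioo 0 1)) (h0 : ∀ z < 0, ψ z = 0) :
    ∫ r in (0:ℝ)..1, r ^ p * ψ (t - r) = rlInt p t φ := by
  rw [← rlInt_congr h, rlInt_eq ht]
  have e := intervalIntegral.integral_comp_sub_left (a := 0) (b := t)
    (fun s => (t - s) ^ p * ψ s) t
  simp only [sub_sub_cancel, sub_self, sub_zero] at e
  rw [← e, ← intervalIntegral.integral_indicator ht]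
  congr 1
  ext r
  by_cases hr : r ≤ t
  · simp [indicator, hr]
  · simp [indicator, hr, h0 (t - r) (by linarith)]

/-- For `u 0 = 0` differentiation in `t` commutes with the Riemann–Liouville integral, also for a
singular kernel (`-1 < p < 0`). After reflection the integrand is `r ^ p * U (t - r)` with `U`
Lipschitz, hence the difference quotients are dominated by a multiple of `r ^ p`. -/
lemma rlInt_hasDerivWithinAt {p : ℝ} (hp : -1 < p) {u u' : ℝ → ℝ}
    (hu : ∀ t ∈ Icc (0:ℝ) 1, HasDerivWithinAt u (u' t) (Icc (0:ℝ) 1) t)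
    (hu' : ContinuousOn u' (Icc 0 1)) (hu0 : u 0 = 0) {t : ℝ} (ht : t ∈ Icc (0:ℝ) 1) :
    HasDerivWithinAt (fun t => rlInt p t u) (rlInt p t u') (Icc (0:ℝ) 1) t := by
  obtain ⟨M, hM⟩ := isCompact_Icc.exists_bound_of_continuousOn hu'
  have hM0 : 0 ≤ M := (norm_nonneg _).trans (hM 0 (by simp))
  have hucont : ContinuousOn u (Icc 0 1) := fun s hs => (hu s hs).continuousWithinAt
  -- `U` extends `u` to the line by the constants `u 0 = 0` and `u 1`; off `{0, 1}` its derivative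
  -- is `V`.
  set U : ℝ → ℝ := fun z => u (projIcc 0 1 zero_le_one z) with hU
  set V : ℝ → ℝ := (Ioo (0:ℝ) 1).indicator (fun z => u' (projIcc 0 1 zero_le_one z)) with hV
  have hUc : Continuous U := hucont.comp_continuous
    (continuous_subtype_val.comp continuous_projIcc) (fun z => (projIcc 0 1 zero_le_one z).2)
  have hVm : Measurable V := (hu'.comp_continuous
    (continuous_subtype_val.comp continuous_projIcc)
    (fun z => (projIcc 0 1 zero_le_one z).2)).measurable.indicator measurableSet_Ioo
  have hUeq : ∀ z ∈ Icc (0:ℝ) 1, U z = u z := fun z hz => by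
    simp [hU, projIcc_of_mem zero_le_one hz]
  have hUneg : ∀ z < 0, U z = 0 := fun z hz => by
    simp [hU, projIcc_of_le_left zero_le_one hz.le, hu0]
  have hVeq : EqOn V u' (Ioo 0 1) := fun z hz => by
    simp only [hV, indicator_of_mem hz, projIcc_of_mem zero_le_one (Ioo_subset_Icc_self hz)]
  have hVneg : ∀ z < 0, V z = 0 := fun z hz => by
    simp only [hV]
    exact indicator_of_notMem (fun h => absurd h.1 (by linarith)) _
  have hUlip : ∀ a b, |U a - U b| ≤ M * |a - b| := fun a b => by
    have h1 := (convex_Icc (0:ℝ) 1).norm_image_sub_le_of_norm_hasDerivWithin_le hu hM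
      (projIcc 0 1 zero_le_one b).2 (projIcc 0 1 zero_le_one a).2
    refine h1.trans (mul_le_mul_of_nonneg_left ?_ hM0)
    simpa [Real.norm_eq_abs] using abs_projIcc_sub_projIcc (c := a) (d := b) (zero_le_one (α := ℝ))
  have hUd : ∀ z, z ≠ 0 → z ≠ 1 → HasDerivAt U (V z) z := by
    intro z hz0 hz1
    rcases lt_or_gt_of_ne hz0 with h | h
    · rw [hVneg z h]
      refine (hasDerivAt_const z (0:ℝ)).congr_of_eventuallyEq ?_
      filter_upwards [Iio_mem_nhds h] with y hy using hUneg y hy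
    rcases lt_or_gt_of_ne hz1 with h' | h'
    · rw [hVeq ⟨h, h'⟩]
      refine ((hu z ⟨h.le, h'.le⟩).hasDerivAt (Icc_mem_nhds h h')).congr_of_eventuallyEq ?_
      filter_upwards [Icc_mem_nhds h h'] with y hy using hUeq y hy
    · have : V z = 0 := indicator_of_notMem (fun h => absurd h.2 (by linarith)) _
      rw [this]
      refine (hasDerivAt_const z (u 1)).congr_of_eventuallyEq ?_
      filter_upwards [Ioi_mem_nhds h'] with y hy
      simp [hU, projIcc_of_right_le zero_le_one (le_of_lt (mem_Ioi.1 hy))]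
  have hrp : IntervalIntegrable (fun r : ℝ => r ^ p) volume 0 1 := intervalIntegrable_rpow' hp
  have key := (intervalIntegral.hasDerivAt_integral_of_dominated_loc_of_lip (μ := volume)
    (a := 0) (b := 1)
    (F := fun τ r => r ^ p * U (τ - r)) (F' := fun r => r ^ p * V (t - r)) (x₀ := t)
    (bound := fun r => r ^ p * M) univ_mem ?_ ?_ ?_ ?_ (hrp.mul_const M) ?_).2
  · rw [rlInt_eq_reflect ht hVeq hVneg] at key
    refine key.hasDerivWithinAt.congr (fun τ hτ => ?_) ?_
    · exact (rlInt_eq_reflect hτ (fun z hz => hUeq z (Ioo_subset_Icc_self hz)) hUneg).symm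
    · exact (rlInt_eq_reflect ht (fun z hz => hUeq z (Ioo_subset_Icc_self hz)) hUneg).symm
  · refine Eventually.of_forall fun τ => Measurable.aestronglyMeasurable ?_
    exact (measurable_id.pow_const p).mul (hUc.measurable.comp (measurable_const.sub measurable_id))
  · exact hrp.mul_continuousOn (hUc.comp (continuous_const.sub continuous_id)).continuousOn
  · refine Measurable.aestronglyMeasurable ?_
    exact (measurable_id.pow_const p).mul (hVm.comp (measurable_const.sub measurable_id))
  · refine Eventually.of_forall fun r hr => LipschitzOnWith.of_dist_le_mul fun a _ b _ => ?_
    rw [uIoc_of_le zero_le_one] at hr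
    have hr0 : 0 ≤ r ^ p := Real.rpow_nonneg hr.1.le _
    have h := hUlip (a - r) (b - r)
    rw [Real.dist_eq, Real.dist_eq, ← mul_sub, abs_mul, Real.coe_nnabs, abs_of_nonneg hr0,
      abs_of_nonneg (mul_nonneg hr0 hM0), mul_assoc]
    refine mul_le_mul_of_nonneg_left ?_ hr0
    simpa using h
  · filter_upwards [Measure.ae_ne volume t, Measure.ae_ne volume (t - 1)] with r h1 h2 _
    have := hUd (t - r) (fun h => h1 (by linarith)) (fun h => h2 (by linarith))
    simpa using (this.comp_sub_const t r).const_mul (r ^ p)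

/-- Differentiating the kernel lowers the exponent. The density is only continuous, so one first
integrates by parts to replace it by its primitive, to which `rlInt_hasDerivWithinAt` applies. -/
lemma rlInt_succ_hasDerivWithinAt {a : ℝ} (ha : 1 < a) {φ : ℝ → ℝ}
    (hφ : ContinuousOn φ (Icc 0 1)) {t : ℝ} (ht : t ∈ Icc (0:ℝ) 1) :
    HasDerivWithinAt (fun t => rlInt a t φ) (a * rlInt (a - 1) t φ) (Icc (0:ℝ) 1) t := by
  set g : ℝ → ℝ := fun z => φ (projIcc 0 1 zero_le_one z) with hg
  have hgc : Continuous g := hφ.comp_continuous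
    (continuous_subtype_val.comp continuous_projIcc) (fun z => (projIcc 0 1 zero_le_one z).2)
  have hgeq : EqOn φ g (Ioo 0 1) := fun z hz => by
    simp only [hg, projIcc_of_mem zero_le_one (Ioo_subset_Icc_self hz)]
  set Φ : ℝ → ℝ := fun s => ∫ z in (0:ℝ)..s, g z with hΦ
  have hΦd : ∀ s, HasDerivAt Φ (g s) s := fun s => (hgc.integral_hasStrictDerivAt 0 s).hasDerivAt
  have hΦ0 : Φ 0 = 0 := by simp [hΦ]
  have parts : ∀ τ ∈ Icc (0:ℝ) 1, rlInt a τ φ = a * rlInt (a - 1) τ Φ := by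
    intro τ hτ
    rw [rlInt_congr hgeq, rlInt_eq hτ, rlInt_eq hτ]
    have hd : ∀ s, HasDerivAt (fun s : ℝ => (τ - s) ^ a) (-(a * (τ - s) ^ (a - 1))) s := by
      intro s
      have h1 := (Real.hasDerivAt_rpow_const (x := τ - s) (p := a) (Or.inr ha.le)).comp s
        ((hasDerivAt_id s).const_sub τ)
      simpa [Function.comp_def] using h1
    have hcont : Continuous fun s : ℝ => -(a * (τ - s) ^ (a - 1)) :=
      (continuous_const.mul ((continuous_const.sub continuous_id).rpow_const
        (fun _ => Or.inr (by linarith)))).neg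
    rw [intervalIntegral.integral_mul_deriv_eq_deriv_mul (fun s _ => hd s) (fun s _ => hΦd s)
      (hcont.intervalIntegrable _ _) (hgc.intervalIntegrable _ _), hΦ0, sub_self τ,
      Real.zero_rpow (by linarith), zero_mul, mul_zero, sub_zero, zero_sub,
      ← intervalIntegral.integral_const_mul, ← intervalIntegral.integral_neg]
    refine intervalIntegral.integral_congr fun s _ => ?_
    ring
  have h := (rlInt_hasDerivWithinAt (p := a - 1) (by linarith)
    (fun s _ => (hΦd s).hasDerivWithinAt) hgc.continuousOn hΦ0 ht).const_mul a
  rw [rlInt_congr hgeq]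
  exact h.congr parts (parts t ht)

lemma rlInt_sub {p t : ℝ} {φ ψ : ℝ → ℝ} (hp : -1 < p) (ht : t ∈ Icc (0:ℝ) 1)
    (hφ : BddCont φ) (hψ : BddCont ψ) :
    rlInt p t (fun s => φ s - ψ s) = rlInt p t φ - rlInt p t ψ := by
  rw [rlInt, rlInt, rlInt, ← intervalIntegral.integral_sub (rlInt_integrable hp ht hφ)
    (rlInt_integrable hp ht hψ)]
  simp only [mul_sub]

/-! ### The operator in terms of Riemann–Liouville integrals -/

/-- The operator `Z` written with Riemann–Liouville integrals: `φ` is the density integrated against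
`GreenG`, `u` the one integrated against `GreenH`, and `v` stands for `u s / (1 - s)`, which absorbs
one power of the singularity `(1 - s) ^ (α - 2)`. The three densities are independent arguments, so
the expression is linear in `(φ, u, v)`. -/
noncomputable def greenVal (α β γ : ℝ) (φ u v : ℝ → ℝ) (t : ℝ) : ℝ :=
  (1 / Real.Gamma (α + β)) *
    (rlInt (α + β - 1) t φ
      + ((α + 1) * t ^ (α + 2) - (α + 2) * t ^ (α + 1)) * rlInt (α + β - 1) 1 φ
      + (α + β - 1) * (t ^ (α + 1) - t ^ (α + 2)) * rlInt (α + β - 2) 1 φ)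
  + (γ / Real.Gamma α) *
    (-rlInt (α - 1) t u
      + ((α + 2) * t ^ (α + 1) - (α + 1) * t ^ (α + 2)) * rlInt (α - 1) 1 u
      + (α - 1) * (t ^ (α + 2) - t ^ (α + 1)) * rlInt (α - 1) 1 v)

/-- The derivative of `greenVal α β γ φ u v` in `t`, where `u'` is the derivative of `u`. -/
noncomputable def greenDer (α β γ : ℝ) (φ u u' v : ℝ → ℝ) (t : ℝ) : ℝ :=
  (1 / Real.Gamma (α + β)) *
    ((α + β - 1) * rlInt (α + β - 2) t φ
      + ((α + 1) * (α + 2) * (t ^ (α + 1) - t ^ α)) * rlInt (α + β - 1) 1 φ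
      + (α + β - 1) * ((α + 1) * t ^ α - (α + 2) * t ^ (α + 1)) * rlInt (α + β - 2) 1 φ)
  + (γ / Real.Gamma α) *
    (-rlInt (α - 1) t u'
      + ((α + 1) * (α + 2) * (t ^ α - t ^ (α + 1))) * rlInt (α - 1) 1 u
      + (α - 1) * ((α + 2) * t ^ (α + 1) - (α + 1) * t ^ α) * rlInt (α - 1) 1 v)

lemma rlKernel_one {p s : ℝ} (hs : s ∈ Ioo (0:ℝ) 1) : rlKernel p 1 s = (1 - s) ^ p := by
  simp [rlKernel, hs.2.le]

/-- Mean value inequality from the endpoint `1`, where `u` vanishes. -/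
lemma abs_div_one_sub_le {u u' : ℝ → ℝ} {M : ℝ}
    (hu : ∀ t ∈ Icc (0:ℝ) 1, HasDerivWithinAt u (u' t) (Icc (0:ℝ) 1) t)
    (hM : ∀ t ∈ Icc (0:ℝ) 1, |u' t| ≤ M) (hu1 : u 1 = 0) {s : ℝ} (hs : s ∈ Ioo (0:ℝ) 1) :
    |u s / (1 - s)| ≤ M := by
  have h := (convex_Icc (0:ℝ) 1).norm_image_sub_le_of_norm_hasDerivWithin_le hu hM
    (right_mem_Icc.2 zero_le_one) (Ioo_subset_Icc_self hs)
  have hs' : 0 < 1 - s := by linarith [hs.2]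
  rw [abs_div, abs_of_pos hs', div_le_iff₀ hs']
  rwa [hu1, sub_zero, Real.norm_eq_abs, Real.norm_eq_abs, abs_sub_comm s 1, abs_of_pos hs'] at h

lemma BddCont.div_one_sub {u u' : ℝ → ℝ}
    (hu : ∀ t ∈ Icc (0:ℝ) 1, HasDerivWithinAt u (u' t) (Icc (0:ℝ) 1) t)
    (hu' : ContinuousOn u' (Icc 0 1)) (hu1 : u 1 = 0) : BddCont (fun s => u s / (1 - s)) := by
  obtain ⟨M, hM⟩ := isCompact_Icc.exists_bound_of_continuousOn hu'
  refine ⟨ContinuousOn.div (fun s hs => ?_) (by fun_prop) (fun s hs => ?_), M,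
    fun s hs => abs_div_one_sub_le hu hM hu1 hs⟩
  · exact (hu s (Ioo_subset_Icc_self hs)).continuousWithinAt.mono Ioo_subset_Icc_self
  · linarith [hs.2]

lemma greenVal_eq {α β γ : ℝ} (hα0 : 0 < α) (hβ2 : 2 < β) {φ u u' : ℝ → ℝ}
    (hφ : ContinuousOn φ (Icc 0 1))
    (hu : ∀ t ∈ Icc (0:ℝ) 1, HasDerivWithinAt u (u' t) (Icc (0:ℝ) 1) t)
    (hu' : ContinuousOn u' (Icc 0 1)) (hu1 : u 1 = 0) {t : ℝ} (ht : t ∈ Icc (0:ℝ) 1) :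
    (∫ s in (0:ℝ)..1, GreenG α β t s * φ s) + ∫ s in (0:ℝ)..1, GreenH α γ t s * u s
      = greenVal α β γ φ u (fun s => u s / (1 - s)) t := by
  have h1 : (1:ℝ) ∈ Icc (0:ℝ) 1 := by simp
  have bφ := BddCont.of_continuousOn hφ
  have bu : BddCont u := .of_continuousOn fun s hs => (hu s hs).continuousWithinAt
  have bv := BddCont.div_one_sub hu hu' hu1
  have eG : ∫ s in (0:ℝ)..1, GreenG α β t s * φ s = ∫ s in (0:ℝ)..1,
      (1 / Real.Gamma (α + β)) * (rlKernel (α + β - 1) t s * φ s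
        + ((α + 1) * t ^ (α + 2) - (α + 2) * t ^ (α + 1)) * (rlKernel (α + β - 1) 1 s * φ s)
        + (α + β - 1) * (t ^ (α + 1) - t ^ (α + 2)) * (rlKernel (α + β - 2) 1 s * φ s)) := by
    refine intervalIntegral.integral_congr_Ioo_of_le zero_le_one fun s hs => ?_
    simp only [rlKernel_one hs]
    simp only [GreenG, rlKernel]
    ring
  have eH : ∫ s in (0:ℝ)..1, GreenH α γ t s * u s = ∫ s in (0:ℝ)..1,
      (γ / Real.Gamma α) * (-(rlKernel (α - 1) t s * u s)
        + ((α + 2) * t ^ (α + 1) - (α + 1) * t ^ (α + 2)) * (rlKernel (α - 1) 1 s * u s)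
        + (α - 1) * (t ^ (α + 2) - t ^ (α + 1)) *
          (rlKernel (α - 1) 1 s * (u s / (1 - s)))) := by
    refine intervalIntegral.integral_congr_Ioo_of_le zero_le_one fun s hs => ?_
    have hs' : 1 - s ≠ 0 := by linarith [hs.2]
    have e : (1 - s) ^ (α - 2) = (1 - s) ^ (α - 1) / (1 - s) := by
      rw [← Real.rpow_sub_one hs']
      congr 1
      ring
    simp only [rlKernel_one hs]
    simp only [GreenH, rlKernel, e]
    ring
  rw [eG, eH, greenVal, intervalIntegral.integral_const_mul, intervalIntegral.integral_const_mul]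
  have iG1 := rlInt_integrable (p := α + β - 1) (by linarith) ht bφ
  have iG2 := rlInt_integrable (p := α + β - 1) (by linarith) h1 bφ
  have iG3 := rlInt_integrable (p := α + β - 2) (by linarith) h1 bφ
  have iH1 : IntervalIntegrable (fun s => -(rlKernel (α - 1) t s * u s)) volume 0 1 :=
    (rlInt_integrable (p := α - 1) (by linarith) ht bu).neg
  have iH2 := rlInt_integrable (p := α - 1) (by linarith) h1 bu
  have iH3 := rlInt_integrable (p := α - 1) (by linarith) h1 bv
  rw [intervalIntegral.integral_add (iG1.add (iG2.const_mul _)) (iG3.const_mul _),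
    intervalIntegral.integral_add iG1 (iG2.const_mul _),
    intervalIntegral.integral_add (iH1.add (iH2.const_mul _)) (iH3.const_mul _),
    intervalIntegral.integral_add iH1 (iH2.const_mul _)]
  simp only [intervalIntegral.integral_const_mul, intervalIntegral.integral_neg, rlInt]

lemma greenVal_hasDerivWithinAt {α β γ : ℝ} (hα0 : 0 < α) (hβ2 : 2 < β) {φ u u' : ℝ → ℝ}
    (v : ℝ → ℝ) (hφ : ContinuousOn φ (Icc 0 1))
    (hu : ∀ t ∈ Icc (0:ℝ) 1, HasDerivWithinAt u (u' t) (Icc (0:ℝ) 1) t)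
    (hu' : ContinuousOn u' (Icc 0 1)) (hu0 : u 0 = 0) {t : ℝ} (ht : t ∈ Icc (0:ℝ) 1) :
    HasDerivWithinAt (greenVal α β γ φ u v) (greenDer α β γ φ u u' v t) (Icc (0:ℝ) 1) t := by
  have d1 : HasDerivWithinAt (fun t : ℝ => t ^ (α + 1)) ((α + 1) * t ^ α) (Icc (0:ℝ) 1) t := by
    have := (Real.hasDerivAt_rpow_const (x := t) (p := α + 1) (Or.inr (by linarith)))
    rw [add_sub_cancel_right] at this
    exact this.hasDerivWithinAt
  have d2 : HasDerivWithinAt (fun t : ℝ => t ^ (α + 2)) ((α + 2) * t ^ (α + 1))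
      (Icc (0:ℝ) 1) t := by
    have := (Real.hasDerivAt_rpow_const (x := t) (p := α + 2) (Or.inr (by linarith)))
    rw [show α + 2 - 1 = α + 1 by ring] at this
    exact this.hasDerivWithinAt
  have k1 := rlInt_succ_hasDerivWithinAt (a := α + β - 1) (by linarith) hφ ht
  have k2 := rlInt_hasDerivWithinAt (p := α - 1) (by linarith) hu hu' hu0 ht
  rw [show α + β - 1 - 1 = α + β - 2 by ring] at k1
  have := ((((k1.add (((d2.const_mul (α + 1)).sub (d1.const_mul (α + 2))).mul_const
      (rlInt (α + β - 1) 1 φ))).add (((d1.sub d2).const_mul (α + β - 1)).mul_const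
      (rlInt (α + β - 2) 1 φ))).const_mul (1 / Real.Gamma (α + β))).add
    (((k2.neg.add (((d1.const_mul (α + 2)).sub (d2.const_mul (α + 1))).mul_const
      (rlInt (α - 1) 1 u))).add (((d2.sub d1).const_mul (α - 1)).mul_const
      (rlInt (α - 1) 1 v))).const_mul (γ / Real.Gamma α)))
  refine this.congr_deriv ?_
  rw [greenDer]
  ring

/-! ### Linearity and bounds -/

section Estimates

variable {α β γ : ℝ} {φ u u' v : ℝ → ℝ} {A M₀ M₁ t : ℝ}

lemma greenVal_sub {φ₁ φ₂ u₁ u₂ v₁ v₂ : ℝ → ℝ} (hα0 : 0 < α) (hβ2 : 2 < β)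
    (hφ₁ : BddCont φ₁) (hφ₂ : BddCont φ₂) (hu₁ : BddCont u₁) (hu₂ : BddCont u₂)
    (hv₁ : BddCont v₁) (hv₂ : BddCont v₂) (ht : t ∈ Icc (0:ℝ) 1) :
    greenVal α β γ φ₁ u₁ v₁ t - greenVal α β γ φ₂ u₂ v₂ t
      = greenVal α β γ (fun s => φ₁ s - φ₂ s) (fun s => u₁ s - u₂ s) (fun s => v₁ s - v₂ s) t := by
  have h1 : (1:ℝ) ∈ Icc (0:ℝ) 1 := by simp
  simp only [greenVal]
  rw [rlInt_sub (by linarith) ht hφ₁ hφ₂, rlInt_sub (by linarith) h1 hφ₁ hφ₂,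
    rlInt_sub (by linarith) h1 hφ₁ hφ₂, rlInt_sub (by linarith) ht hu₁ hu₂,
    rlInt_sub (by linarith) h1 hu₁ hu₂, rlInt_sub (by linarith) h1 hv₁ hv₂]
  ring

lemma greenDer_sub {φ₁ φ₂ u₁ u₂ u₁' u₂' v₁ v₂ : ℝ → ℝ} (hα0 : 0 < α) (hβ2 : 2 < β)
    (hφ₁ : BddCont φ₁) (hφ₂ : BddCont φ₂) (hu₁ : BddCont u₁) (hu₂ : BddCont u₂)
    (hu₁' : BddCont u₁') (hu₂' : BddCont u₂')
    (hv₁ : BddCont v₁) (hv₂ : BddCont v₂) (ht : t ∈ Icc (0:ℝ) 1) :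
    greenDer α β γ φ₁ u₁ u₁' v₁ t - greenDer α β γ φ₂ u₂ u₂' v₂ t
      = greenDer α β γ (fun s => φ₁ s - φ₂ s) (fun s => u₁ s - u₂ s) (fun s => u₁' s - u₂' s)
          (fun s => v₁ s - v₂ s) t := by
  have h1 : (1:ℝ) ∈ Icc (0:ℝ) 1 := by simp
  simp only [greenDer]
  rw [rlInt_sub (by linarith) ht hφ₁ hφ₂, rlInt_sub (by linarith) h1 hφ₁ hφ₂,
    rlInt_sub (by linarith) h1 hφ₁ hφ₂, rlInt_sub (by linarith) ht hu₁' hu₂',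
    rlInt_sub (by linarith) h1 hu₁ hu₂, rlInt_sub (by linarith) h1 hv₁ hv₂]
  ring

lemma abs_three_le {x y z c d X Y Z C D : ℝ} (hx : |x| ≤ X) (hc : |c| ≤ C) (hy : |y| ≤ Y)
    (hd : |d| ≤ D) (hz : |z| ≤ Z) : |x + c * y + d * z| ≤ X + C * Y + D * Z := by
  refine (abs_add_three _ _ _).trans ?_
  rw [abs_mul, abs_mul]
  have := (abs_nonneg c).trans hc
  have := (abs_nonneg d).trans hd
  gcongr

/-- The bracket multiplying `1 / Γ(α + β + 1)` is at most `(4 + (α + β)) A ≤ 8 A`, and the one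
multiplying `|γ| / Γ(α + 1)` is at most `4 M₀ + M₁`; the stated constants leave room. -/
lemma greenVal_abs_le (hα0 : 0 < α) (hα1 : α ≤ 1) (hβ2 : 2 < β) (hβ3 : β ≤ 3)
    (hφ : ∀ s ∈ Ioo (0:ℝ) 1, |φ s| ≤ A) (hu : ∀ s ∈ Ioo (0:ℝ) 1, |u s| ≤ M₀)
    (hv : ∀ s ∈ Ioo (0:ℝ) 1, |v s| ≤ M₁) (ht : t ∈ Icc (0:ℝ) 1) :
    |greenVal α β γ φ u v t|
      ≤ 14 * A / Real.Gamma (α + β + 1) + 8 * |γ| / Real.Gamma (α + 1) * (M₀ + M₁) := by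
  have h1 : (1:ℝ) ∈ Icc (0:ℝ) 1 := by simp
  have hA : 0 ≤ A := (abs_nonneg _).trans (hφ (1 / 2) (by norm_num))
  have hM₀ : 0 ≤ M₀ := (abs_nonneg _).trans (hu (1 / 2) (by norm_num))
  have hM₁ : 0 ≤ M₁ := (abs_nonneg _).trans (hv (1 / 2) (by norm_num))
  have hΓ1 := Real.Gamma_pos_of_pos (show 0 < α + β by linarith)
  have hΓ2 := Real.Gamma_pos_of_pos hα0
  have p0 : 0 ≤ t ^ (α + 1) := Real.rpow_nonneg ht.1 _
  have p1 : t ^ (α + 1) ≤ 1 := Real.rpow_le_one ht.1 ht.2 (by linarith)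
  have q0 : 0 ≤ t ^ (α + 2) := Real.rpow_nonneg ht.1 _
  have q1 : t ^ (α + 2) ≤ 1 := Real.rpow_le_one ht.1 ht.2 (by linarith)
  have c1 : |(α + 1) * t ^ (α + 2) - (α + 2) * t ^ (α + 1)| ≤ 3 := by
    rw [abs_le]; constructor <;> nlinarith
  have c1' : |(α + 2) * t ^ (α + 1) - (α + 1) * t ^ (α + 2)| ≤ 3 := by rwa [abs_sub_comm]
  have c2 : |(α + β - 1) * (t ^ (α + 1) - t ^ (α + 2))| ≤ α + β - 1 := by
    rw [abs_le]; constructor <;> nlinarith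
  have c3 : |(α - 1) * (t ^ (α + 2) - t ^ (α + 1))| ≤ 1 := by
    rw [abs_le]; constructor <;> nlinarith
  have eG := abs_three_le (rlInt_abs_le (p := α + β - 1) (by linarith) ht hφ) c1
    (rlInt_abs_le (p := α + β - 1) (by linarith) h1 hφ) c2
    (rlInt_abs_le (p := α + β - 2) (by linarith) h1 hφ)
  have eH := abs_three_le ((abs_neg _).trans_le (rlInt_abs_le (p := α - 1) (by linarith) ht hu)) c1'
    (rlInt_abs_le (p := α - 1) (by linarith) h1 hu) c3
    (rlInt_abs_le (p := α - 1) (by linarith) h1 hv)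
  rw [greenVal]
  refine (abs_add_le _ _).trans (add_le_add ?_ ?_)
  · rw [abs_mul, abs_of_pos (by positivity), Real.Gamma_add_one (by linarith)]
    refine (mul_le_mul_of_nonneg_left eG (by positivity)).trans ?_
    rw [show α + β - 1 + 1 = α + β by ring, show α + β - 2 + 1 = α + β - 1 by ring,
      mul_div_cancel₀ _ (by linarith : α + β - 1 ≠ 0)]
    have hs : 0 < α + β := by linarith
    have : (1 / Real.Gamma (α + β)) * (A / (α + β) + 3 * (A / (α + β)) + A)
        = (4 + (α + β)) * A / ((α + β) * Real.Gamma (α + β)) := by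
      field_simp; ring
    rw [this]
    gcongr
    linarith
  · rw [abs_mul, abs_div, abs_of_pos hΓ2, Real.Gamma_add_one hα0.ne']
    refine (mul_le_mul_of_nonneg_left eH (by positivity)).trans ?_
    rw [show α - 1 + 1 = α by ring]
    have : |γ| / Real.Gamma α * (M₀ / α + 3 * (M₀ / α) + 1 * (M₁ / α))
        = |γ| / (α * Real.Gamma α) * (4 * M₀ + M₁) := by
      field_simp; ring
    rw [this, mul_div_assoc, mul_comm (8:ℝ), mul_assoc]
    gcongr
    linarith

/-- The bracket multiplying `1 / Γ(α + β + 1)` is at most `(6 + 4 (α + β)) A ≤ 22 A`, and the one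
multiplying `|γ| / Γ(α + 1)` is at most `6 M₀ + 4 M₁`; the stated constants leave room. -/
lemma greenDer_abs_le (hα0 : 0 < α) (hα1 : α ≤ 1) (hβ2 : 2 < β) (hβ3 : β ≤ 3)
    (hφ : ∀ s ∈ Ioo (0:ℝ) 1, |φ s| ≤ A) (hu : ∀ s ∈ Ioo (0:ℝ) 1, |u s| ≤ M₀)
    (hu' : ∀ s ∈ Ioo (0:ℝ) 1, |u' s| ≤ M₁)
    (hv : ∀ s ∈ Ioo (0:ℝ) 1, |v s| ≤ M₁) (ht : t ∈ Icc (0:ℝ) 1) :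
    |greenDer α β γ φ u u' v t|
      ≤ 36 * A / Real.Gamma (α + β + 1) + 18 * |γ| / Real.Gamma (α + 1) * (M₀ + M₁) := by
  have h1 : (1:ℝ) ∈ Icc (0:ℝ) 1 := by simp
  have hA : 0 ≤ A := (abs_nonneg _).trans (hφ (1 / 2) (by norm_num))
  have hM₀ : 0 ≤ M₀ := (abs_nonneg _).trans (hu (1 / 2) (by norm_num))
  have hM₁ : 0 ≤ M₁ := (abs_nonneg _).trans (hv (1 / 2) (by norm_num))
  have hΓ1 := Real.Gamma_pos_of_pos (show 0 < α + β by linarith)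
  have hΓ2 := Real.Gamma_pos_of_pos hα0
  have p0 : 0 ≤ t ^ (α + 1) := Real.rpow_nonneg ht.1 _
  have p1 : t ^ (α + 1) ≤ 1 := Real.rpow_le_one ht.1 ht.2 (by linarith)
  have q0 : 0 ≤ t ^ α := Real.rpow_nonneg ht.1 _
  have q1 : t ^ α ≤ 1 := Real.rpow_le_one ht.1 ht.2 hα0.le
  have hd : |t ^ (α + 1) - t ^ α| ≤ 1 := by
    rw [abs_le]; constructor <;> linarith
  have c1 : |(α + 1) * (α + 2) * (t ^ (α + 1) - t ^ α)| ≤ 6 := by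
    rw [abs_mul, abs_of_pos (by positivity)]
    calc _ ≤ (1 + 1) * (1 + 2) * (1:ℝ) := by gcongr
      _ = 6 := by norm_num
  have c1' : |(α + 1) * (α + 2) * (t ^ α - t ^ (α + 1))| ≤ 6 := by
    rwa [← neg_sub, mul_neg, abs_neg]
  have c0 : |(α + 1) * t ^ α - (α + 2) * t ^ (α + 1)| ≤ 3 := by
    rw [abs_le]; constructor <;> nlinarith
  have c2 : |(α + β - 1) * ((α + 1) * t ^ α - (α + 2) * t ^ (α + 1))| ≤ (α + β - 1) * 3 := by
    rw [abs_mul, abs_of_pos (by linarith : 0 < α + β - 1)]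
    exact mul_le_mul_of_nonneg_left c0 (by linarith)
  have c3 : |(α - 1) * ((α + 2) * t ^ (α + 1) - (α + 1) * t ^ α)| ≤ 3 := by
    rw [abs_mul, abs_sub_comm ((α + 2) * t ^ (α + 1))]
    have : |α - 1| ≤ 1 := by rw [abs_le]; constructor <;> linarith
    calc _ ≤ 1 * (3:ℝ) := mul_le_mul this c0 (abs_nonneg _) zero_le_one
      _ = 3 := one_mul _
  have hk : |(α + β - 1) * rlInt (α + β - 2) t φ| ≤ A := by
    rw [abs_mul, abs_of_pos (by linarith : 0 < α + β - 1)]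
    have := rlInt_abs_le (p := α + β - 2) (by linarith) ht hφ
    rwa [show α + β - 2 + 1 = α + β - 1 by ring, le_div_iff₀' (by linarith)] at this
  have eG := abs_three_le hk c1
    (rlInt_abs_le (p := α + β - 1) (by linarith) h1 hφ) c2
    (rlInt_abs_le (p := α + β - 2) (by linarith) h1 hφ)
  have eH := abs_three_le ((abs_neg _).trans_le (rlInt_abs_le (p := α - 1) (by linarith) ht hu'))
    c1' (rlInt_abs_le (p := α - 1) (by linarith) h1 hu) c3
    (rlInt_abs_le (p := α - 1) (by linarith) h1 hv)
  rw [greenDer]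
  refine (abs_add_le _ _).trans (add_le_add ?_ ?_)
  · rw [abs_mul, abs_of_pos (by positivity), Real.Gamma_add_one (by linarith)]
    refine (mul_le_mul_of_nonneg_left eG (by positivity)).trans ?_
    have hs : 0 < α + β := by linarith
    have hs' : 0 < α + β - 1 := by linarith
    rw [show α + β - 1 + 1 = α + β by ring, show α + β - 2 + 1 = α + β - 1 by ring,
      show (α + β - 1) * 3 * (A / (α + β - 1)) = 3 * A by field_simp]
    have : (1 / Real.Gamma (α + β)) * (A + 6 * (A / (α + β)) + 3 * A)
        = (6 + 4 * (α + β)) * A / ((α + β) * Real.Gamma (α + β)) := by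
      field_simp; ring
    rw [this]
    gcongr
    linarith
  · rw [abs_mul, abs_div, abs_of_pos hΓ2, Real.Gamma_add_one hα0.ne']
    refine (mul_le_mul_of_nonneg_left eH (by positivity)).trans ?_
    rw [show α - 1 + 1 = α by ring]
    have : |γ| / Real.Gamma α * (M₁ / α + 6 * (M₀ / α) + 3 * (M₁ / α))
        = |γ| / (α * Real.Gamma α) * (6 * M₀ + 4 * M₁) := by
      field_simp; ring
    rw [this, mul_div_assoc, mul_comm (18:ℝ), mul_assoc]
    gcongr
    linarith

end Estimates

lemma le_ciSup_abs_sub {a b : ℝ → ℝ} (ha : ContinuousOn a (Icc 0 1))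
    (hb : ContinuousOn b (Icc 0 1)) {s : ℝ} (hs : s ∈ Icc (0:ℝ) 1) :
    |a s - b s| ≤ ⨆ t : Icc (0:ℝ) 1, |a t - b t| := by
  obtain ⟨M, hM⟩ := isCompact_Icc.exists_bound_of_continuousOn (ha.sub hb)
  refine le_ciSup (f := fun t : Icc (0:ℝ) 1 => |a t - b t|) ⟨M, ?_⟩ ⟨s, hs⟩
  rintro _ ⟨t, rfl⟩
  exact hM t t.2

theorem contraction_estimate (α β γ : ℝ) (hα0 : 0 < α) (hα1 : α ≤ 1)
    (hβ2 : 2 < β) (hβ3 : β ≤ 3) (f : ℝ → ℝ → ℝ → ℝ)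
    (hf : ContinuousOn (fun p : ℝ × ℝ × ℝ => f p.1 p.2.1 p.2.2)
      (Set.Icc 0 1 ×ˢ (Set.univ : Set (ℝ × ℝ))))
    (w : ℝ) (hw : 0 < w)
    (hlip : ∀ t ∈ Set.Icc (0:ℝ) 1, ∀ p q u v : ℝ,
      |f t p q - f t u v| ≤ w * (|p - u| + |q - v|))
    (ψ : ℝ)
    (hψ : ψ = (14 * w / Real.Gamma (α + β + 1) + 8 * |γ| / Real.Gamma (α + 1))
      + (36 * w / Real.Gamma (α + β + 1) + 18 * |γ| / Real.Gamma (α + 1)))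
    (x x' y y' : ℝ → ℝ)
    (hx : ∀ t ∈ Set.Icc (0:ℝ) 1, HasDerivWithinAt x (x' t) (Set.Icc (0:ℝ) 1) t)
    (hx'c : ContinuousOn x' (Set.Icc 0 1)) (hx0 : x 0 = 0) (hx1 : x 1 = 0)
    (hy : ∀ t ∈ Set.Icc (0:ℝ) 1, HasDerivWithinAt y (y' t) (Set.Icc (0:ℝ) 1) t)
    (hy'c : ContinuousOn y' (Set.Icc 0 1)) (hy0 : y 0 = 0) (hy1 : y 1 = 0) :
    ∃ Zx' Zy' : ℝ → ℝ,
      (∀ t ∈ Set.Icc (0:ℝ) 1,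
        HasDerivWithinAt
          (fun t => (∫ s in (0:ℝ)..1, GreenG α β t s * f s (x s) (x' s))
            + ∫ s in (0:ℝ)..1, GreenH α γ t s * x s)
          (Zx' t) (Set.Icc (0:ℝ) 1) t) ∧
      (∀ t ∈ Set.Icc (0:ℝ) 1,
        HasDerivWithinAt
          (fun t => (∫ s in (0:ℝ)..1, GreenG α β t s * f s (y s) (y' s))
            + ∫ s in (0:ℝ)..1, GreenH α γ t s * y s)
          (Zy' t) (Set.Icc (0:ℝ) 1) t) ∧
      (⨆ t : Set.Icc (0:ℝ) 1,
          |((∫ s in (0:ℝ)..1, GreenG α β (↑t) s * f s (x s) (x' s))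
              + ∫ s in (0:ℝ)..1, GreenH α γ (↑t) s * x s)
            - ((∫ s in (0:ℝ)..1, GreenG α β (↑t) s * f s (y s) (y' s))
              + ∫ s in (0:ℝ)..1, GreenH α γ (↑t) s * y s)|)
        + (⨆ t : Set.Icc (0:ℝ) 1, |Zx' t - Zy' t|)
      ≤ ψ * ((⨆ t : Set.Icc (0:ℝ) 1, |x t - y t|)
          + ⨆ t : Set.Icc (0:ℝ) 1, |x' t - y' t|) := by
  have hxc : ContinuousOn x (Icc 0 1) := fun s hs => (hx s hs).continuousWithinAt
  have hyc : ContinuousOn y (Icc 0 1) := fun s hs => (hy s hs).continuousWithinAt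
  have hfx : ContinuousOn (fun s => f s (x s) (x' s)) (Icc 0 1) :=
    hf.comp (continuousOn_id.prodMk (hxc.prodMk hx'c)) fun s hs => ⟨hs, mem_univ _⟩
  have hfy : ContinuousOn (fun s => f s (y s) (y' s)) (Icc 0 1) :=
    hf.comp (continuousOn_id.prodMk (hyc.prodMk hy'c)) fun s hs => ⟨hs, mem_univ _⟩
  set M₀ := ⨆ t : Icc (0:ℝ) 1, |x t - y t|
  set M₁ := ⨆ t : Icc (0:ℝ) 1, |x' t - y' t|
  have hM₀ : ∀ s ∈ Icc (0:ℝ) 1, |x s - y s| ≤ M₀ := fun s hs => le_ciSup_abs_sub hxc hyc hs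
  have hM₁ : ∀ s ∈ Icc (0:ℝ) 1, |x' s - y' s| ≤ M₁ := fun s hs => le_ciSup_abs_sub hx'c hy'c hs
  have bφ : ∀ s ∈ Ioo (0:ℝ) 1, |f s (x s) (x' s) - f s (y s) (y' s)| ≤ w * (M₀ + M₁) := by
    intro s hs
    have hs' := Ioo_subset_Icc_self hs
    refine (hlip s hs' _ _ _ _).trans (mul_le_mul_of_nonneg_left ?_ hw.le)
    exact add_le_add (hM₀ s hs') (hM₁ s hs')
  have bu : ∀ s ∈ Ioo (0:ℝ) 1, |x s - y s| ≤ M₀ := fun s hs => hM₀ s (Ioo_subset_Icc_self hs)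
  have bu' : ∀ s ∈ Ioo (0:ℝ) 1, |x' s - y' s| ≤ M₁ := fun s hs => hM₁ s (Ioo_subset_Icc_self hs)
  have bv : ∀ s ∈ Ioo (0:ℝ) 1, |x s / (1 - s) - y s / (1 - s)| ≤ M₁ := by
    intro s hs
    have := abs_div_one_sub_le (u := fun s => x s - y s)
      (fun t ht => (hx t ht).sub (hy t ht)) hM₁ (by simp [hx1, hy1]) hs
    rwa [sub_div] at this
  have cfx := BddCont.of_continuousOn hfx
  have cfy := BddCont.of_continuousOn hfy
  have cx := BddCont.of_continuousOn hxc
  have cy := BddCont.of_continuousOn hyc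
  have cx' := BddCont.of_continuousOn hx'c
  have cy' := BddCont.of_continuousOn hy'c
  have cvx := BddCont.div_one_sub hx hx'c hx1
  have cvy := BddCont.div_one_sub hy hy'c hy1
  refine ⟨greenDer α β γ (fun s => f s (x s) (x' s)) x x' (fun s => x s / (1 - s)),
    greenDer α β γ (fun s => f s (y s) (y' s)) y y' (fun s => y s / (1 - s)), ?_, ?_, ?_⟩
  · intro t ht
    exact (greenVal_hasDerivWithinAt hα0 hβ2 _ hfx hx hx'c hx0 ht).congr
      (fun τ hτ => greenVal_eq hα0 hβ2 hfx hx hx'c hx1 hτ)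
      (greenVal_eq hα0 hβ2 hfx hx hx'c hx1 ht)
  · intro t ht
    exact (greenVal_hasDerivWithinAt hα0 hβ2 _ hfy hy hy'c hy0 ht).congr
      (fun τ hτ => greenVal_eq hα0 hβ2 hfy hy hy'c hy1 hτ)
      (greenVal_eq hα0 hβ2 hfy hy hy'c hy1 ht)
  · have hne : Nonempty (Icc (0:ℝ) 1) := ⟨⟨0, by simp⟩⟩
    refine (add_le_add
      (b := 14 * (w * (M₀ + M₁)) / Real.Gamma (α + β + 1)
        + 8 * |γ| / Real.Gamma (α + 1) * (M₀ + M₁))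
      (d := 36 * (w * (M₀ + M₁)) / Real.Gamma (α + β + 1)
        + 18 * |γ| / Real.Gamma (α + 1) * (M₀ + M₁))
      (ciSup_le fun t => ?_) (ciSup_le fun t => ?_)).trans (le_of_eq ?_)
    · rw [greenVal_eq hα0 hβ2 hfx hx hx'c hx1 t.2, greenVal_eq hα0 hβ2 hfy hy hy'c hy1 t.2,
        greenVal_sub hα0 hβ2 cfx cfy cx cy cvx cvy t.2]
      exact greenVal_abs_le hα0 hα1 hβ2 hβ3 bφ bu bv t.2
    · rw [greenDer_sub hα0 hβ2 cfx cfy cx cy cx' cy' cvx cvy t.2]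
      exact greenDer_abs_le hα0 hα1 hβ2 hβ3 bφ bu bu' bv t.2
    · rw [hψ]
      ring
end
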